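/- arXiv:1402.4694 — 2 statements merged into one kernel-verified Lean document; each statement's English description precedes it below -/
import Mathlib

section
/- Let α ∈ (0,π), γ ∈ (0,π/2], B = (sin γ·cos(α/2), sin γ·sin(α/2), cos γ), and τ ∈ ℝ. Then the bottom of the essential spectrum of the Neumann realization on the sector, given by Persson's characterization s_ess(B;α,τ) = sup_{R>0} Σ(B;α,τ,R), satisfies s_ess(B;α,τ) = inf_{ξ∈ℝ} ( μ₁(ξ·cos γ + τ·sin γ) + (ξ·sin γ − τ·cos γ)² ). -/
open Real MeasureTheory Set Filter

noncomputable section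

namespace MagWedge

/-- The infinite sector `S_α := {(x₁,x₂) : |x₂| ≤ x₁·tan(α/2)}`. -/
def sector (α : ℝ) : Set (ℝ × ℝ) :=
  {x | |x.2| ≤ x.1 * Real.tan (α / 2)}

/-- The infinite wedge `W_α := S_α × ℝ` (coordinates `(x₁, x₂, x₃)`). -/
def wedge (α : ℝ) : Set (ℝ × ℝ × ℝ) :=
  {x | |x.2.1| ≤ x.1 * Real.tan (α / 2)}

/-- The upper half-plane `Hp^up := {x₂ < x₁·tan(α/2)}`. -/
def hpUp (α : ℝ) : Set (ℝ × ℝ) :=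
  {x | x.2 < x.1 * Real.tan (α / 2)}

/-- The lower half-plane `Hp^low := {x₂ > −x₁·tan(α/2)}`. -/
def hpLow (α : ℝ) : Set (ℝ × ℝ) :=
  {x | -(x.1 * Real.tan (α / 2)) < x.2}

/-- The magnetic/electric energy of `u` on a planar domain `Ω`, for magnetic field
`(b₁,b₂,b₃)` (gauge `A̲ = (−x₂ b₃, 0)`) and Fourier parameter `τ`. -/
def energy2D (Ω : Set (ℝ × ℝ)) (b1 b2 b3 τ : ℝ) (u : ℝ × ℝ → ℂ) : ℝ :=
  ∫ x in Ω,
    ‖(-Complex.I) * fderiv ℝ u x (1, 0) + ((x.2 * b3 : ℝ) : ℂ) * u x‖ ^ 2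
      + ‖fderiv ℝ u x (0, 1)‖ ^ 2
      + (x.1 * b2 - x.2 * b1 - τ) ^ 2 * ‖u x‖ ^ 2

/-- The squared `L²`-norm of `u` on a planar domain `Ω`. -/
def norm2D (Ω : Set (ℝ × ℝ)) (u : ℝ × ℝ → ℂ) : ℝ := ∫ x in Ω, ‖u x‖ ^ 2

/-- The bottom of the spectrum of the Neumann realization of
`(−i∇−A̲)² + (x₁b₂−x₂b₁−τ)²` on `Ω`, via the Rayleigh quotient. -/
def specInf2D (Ω : Set (ℝ × ℝ)) (b1 b2 b3 τ : ℝ) : ℝ :=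
  sInf { r : ℝ | ∃ u : ℝ × ℝ → ℂ, ContDiff ℝ (⊤ : ℕ∞) u ∧ HasCompactSupport u ∧
    0 < norm2D Ω u ∧ r = energy2D Ω b1 b2 b3 τ u / norm2D Ω u }

/-- The band function `s(B;α,τ)` on the sector `S_α`. -/
def bandFn (α b1 b2 b3 τ : ℝ) : ℝ := specInf2D (sector α) b1 b2 b3 τ

/-- `Σ(B;α,τ,R)` : the Rayleigh quotient infimum over functions supported outside the
(closed Euclidean) ball of radius `R` centered at the origin. -/
def SigmaR (α b1 b2 b3 τ R : ℝ) : ℝ :=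
  sInf { r : ℝ | ∃ u : ℝ × ℝ → ℂ, ContDiff ℝ (⊤ : ℕ∞) u ∧ HasCompactSupport u ∧
    (tsupport u ⊆ {x : ℝ × ℝ | R ^ 2 < x.1 ^ 2 + x.2 ^ 2}) ∧
    0 < norm2D (sector α) u ∧
    r = energy2D (sector α) b1 b2 b3 τ u / norm2D (sector α) u }

/-- The bottom of the essential spectrum via Persson's characterization:
`s_ess(B;α,τ) = sup_{R>0} Σ(B;α,τ,R)`. -/
def sEss (α b1 b2 b3 τ : ℝ) : ℝ :=
  sSup { r : ℝ | ∃ R > (0 : ℝ), r = SigmaR α b1 b2 b3 τ R }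

/-- The 3D magnetic energy on a domain `Ω ⊆ ℝ³` for the constant field `(b₁,b₂,b₃)`,
in the gauge `A = (−x₂b₃, 0, x₂b₁ − x₁b₂)`. -/
def energy3D (Ω : Set (ℝ × ℝ × ℝ)) (b1 b2 b3 : ℝ) (u : ℝ × ℝ × ℝ → ℂ) : ℝ :=
  ∫ x in Ω,
    ‖(-Complex.I) * fderiv ℝ u x (1, 0, 0) + ((x.2.1 * b3 : ℝ) : ℂ) * u x‖ ^ 2
      + ‖fderiv ℝ u x (0, 1, 0)‖ ^ 2
      + ‖(-Complex.I) * fderiv ℝ u x (0, 0, 1) - ((x.2.1 * b1 : ℝ) : ℂ) * u x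
          + ((x.1 * b2 : ℝ) : ℂ) * u x‖ ^ 2

/-- The squared `L²`-norm of `u` on a domain `Ω ⊆ ℝ³`. -/
def norm3D (Ω : Set (ℝ × ℝ × ℝ)) (u : ℝ × ℝ × ℝ → ℂ) : ℝ := ∫ x in Ω, ‖u x‖ ^ 2

/-- `λ(B;W_α)` : the bottom of the spectrum of the Neumann magnetic Laplacian on the
wedge `W_α` with constant magnetic field `B = (b₁,b₂,b₃)`. -/
def lambdaWedge (α b1 b2 b3 : ℝ) : ℝ :=
  sInf { r : ℝ | ∃ u : ℝ × ℝ × ℝ → ℂ, ContDiff ℝ (⊤ : ℕ∞) u ∧ HasCompactSupport u ∧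
    0 < norm3D (wedge α) u ∧ r = energy3D (wedge α) b1 b2 b3 u / norm3D (wedge α) u }

/-- The de Gennes function `μ₁(ξ)`: bottom of the spectrum of the Neumann realization of
`−d²/dt² + (t−ξ)²` on the half-line. -/
def deGennes (ξ : ℝ) : ℝ :=
  sInf { r : ℝ | ∃ u : ℝ → ℂ, ContDiff ℝ (⊤ : ℕ∞) u ∧ HasCompactSupport u ∧
    (0 < ∫ t in Ioi (0 : ℝ), ‖u t‖ ^ 2) ∧
    r = (∫ t in Ioi (0 : ℝ), ‖deriv u t‖ ^ 2 + (t - ξ) ^ 2 * ‖u t‖ ^ 2) /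
        (∫ t in Ioi (0 : ℝ), ‖u t‖ ^ 2) }

/-- `Θ₀ := inf_ξ μ₁(ξ)`. -/
def Theta0 : ℝ := ⨅ ξ : ℝ, deGennes ξ

/-- The half-space `{(s,t,z) : t > 0}` in ℝ³. -/
def halfSpace3 : Set (ℝ × ℝ × ℝ) := {x | 0 < x.2.1}

/-- `σ(θ)` : the bottom of the spectrum of the Neumann magnetic Laplacian on the half-space
with a unit magnetic field making angle `θ` with the boundary. -/
def sigmaHS (θ : ℝ) : ℝ :=
  sInf { r : ℝ | ∃ u : ℝ × ℝ × ℝ → ℂ, ContDiff ℝ (⊤ : ℕ∞) u ∧ HasCompactSupport u ∧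
    (0 < ∫ x in halfSpace3, ‖u x‖ ^ 2) ∧
    r = (∫ x in halfSpace3,
          ‖fderiv ℝ u x (1, 0, 0)‖ ^ 2 + ‖fderiv ℝ u x (0, 1, 0)‖ ^ 2
            + ‖(-Complex.I) * fderiv ℝ u x (0, 0, 1)
                - ((x.2.1 * Real.cos θ : ℝ) : ℂ) * u x
                + ((x.1 * Real.sin θ : ℝ) : ℂ) * u x‖ ^ 2) /
        (∫ x in halfSpace3, ‖u x‖ ^ 2) }

/-- `μ(α)` : the bottom of the spectrum of the magnetic Neumann Laplacian on the sector
`S_α` with unit constant (scalar) magnetic field. -/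
def muSector (α : ℝ) : ℝ :=
  sInf { r : ℝ | ∃ u : ℝ × ℝ → ℂ, ContDiff ℝ (⊤ : ℕ∞) u ∧ HasCompactSupport u ∧
    0 < norm2D (sector α) u ∧
    r = (∫ x in sector α,
          ‖(-Complex.I) * fderiv ℝ u x (1, 0) + (x.2 : ℂ) * u x‖ ^ 2
            + ‖fderiv ℝ u x (0, 1)‖ ^ 2) / norm2D (sector α) u }

end MagWedge

namespace MagWedge

open scoped FourierTransform ContDiff Topology

/-- The de Gennes inequality for a smooth compactly supported function. -/
lemma deGennes_le (ξ : ℝ) (u : ℝ → ℂ) (hu : ContDiff ℝ ∞ u) (hc : HasCompactSupport u) :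
    deGennes ξ * (∫ t in Ioi (0 : ℝ), ‖u t‖ ^ 2) ≤
      ∫ t in Ioi (0 : ℝ), ‖deriv u t‖ ^ 2 + (t - ξ) ^ 2 * ‖u t‖ ^ 2 := by
  have h0 : 0 ≤ ∫ t in Ioi (0 : ℝ), ‖deriv u t‖ ^ 2 + (t - ξ) ^ 2 * ‖u t‖ ^ 2 :=
    integral_nonneg fun t => by positivity
  have h1 : 0 ≤ ∫ t in Ioi (0 : ℝ), ‖u t‖ ^ 2 := integral_nonneg fun t => by positivity
  rcases h1.eq_or_lt with h | h
  · rw [← h]; simpa using h0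
  · rw [← le_div_iff₀ h]
    apply csInf_le
    · refine ⟨0, ?_⟩
      rintro r ⟨v, -, -, hv, rfl⟩
      apply div_nonneg _ hv.le
      exact integral_nonneg fun t => by positivity
    · exact ⟨u, hu, hc, h, rfl⟩

lemma deGennes_nonneg (ξ : ℝ) : 0 ≤ deGennes ξ := by
  apply Real.sInf_nonneg
  rintro r ⟨v, -, -, hv, rfl⟩
  apply div_nonneg _ hv.le
  exact integral_nonneg fun t => by positivity

/-- The half-plane bottom of spectrum. -/
def Ebot (γ τ : ℝ) : ℝ :=
  ⨅ ξ : ℝ, (deGennes (ξ * Real.cos γ + τ * Real.sin γ)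
          + (ξ * Real.sin γ - τ * Real.cos γ) ^ 2)

lemma Ebot_le (γ τ ξ : ℝ) : Ebot γ τ ≤ deGennes (ξ * Real.cos γ + τ * Real.sin γ)
          + (ξ * Real.sin γ - τ * Real.cos γ) ^ 2 := by
  apply ciInf_le
  refine ⟨0, ?_⟩
  rintro _ ⟨ξ, rfl⟩
  have := deGennes_nonneg (ξ * Real.cos γ + τ * Real.sin γ)
  positivity

/-- Partial Fourier transform in the first variable. -/
def pF (f : ℝ × ℝ → ℂ) (k t : ℝ) : ℂ := 𝓕 (fun s => f (s, t)) k

lemma pF_eq (f : ℝ × ℝ → ℂ) (k t : ℝ) :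
    pF f k t = ∫ s : ℝ, (Real.fourierChar (-(s * k)) : ℂ) * f (s, t) := by
  unfold pF
  rw [Real.fourier_eq]
  congr 1; ext s
  simp [Circle.smul_def, mul_comm]

lemma slice_contDiff {f : ℝ × ℝ → ℂ} (hf : ContDiff ℝ ∞ f) (t : ℝ) :
    ContDiff ℝ ∞ (fun s => f (s, t)) := by
  fun_prop

lemma slice_contDiff' {f : ℝ × ℝ → ℂ} (hf : ContDiff ℝ ∞ f) (s : ℝ) :
    ContDiff ℝ ∞ (fun t => f (s, t)) := by
  fun_prop

lemma exists_box {f : ℝ × ℝ → ℂ} (hc : HasCompactSupport f) :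
    ∃ M : ℝ, 0 < M ∧ ∀ s t, f (s, t) ≠ 0 → |s| ≤ M ∧ |t| ≤ M := by
  obtain ⟨M, hM⟩ := hc.isCompact.isBounded.exists_norm_le
  refine ⟨max M 1, by positivity, fun s t h => ?_⟩
  have := hM (s, t) (subset_tsupport _ h)
  rw [Prod.norm_mk] at this
  simp only [Real.norm_eq_abs] at this
  have := le_max_left |s| |t|
  have := le_max_right |s| |t|
  have := le_max_left M 1
  constructor <;> linarith

lemma slice_compact {f : ℝ × ℝ → ℂ} (hc : HasCompactSupport f) (t : ℝ) :
    HasCompactSupport (fun s => f (s, t)) := by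
  obtain ⟨M, -, h⟩ := exists_box hc
  apply HasCompactSupport.intro (isCompact_Icc (a := -M) (b := M))
  intro s hs
  by_contra h'
  exact hs (abs_le.1 (h s t h').1)

lemma dt_hasDeriv {f : ℝ × ℝ → ℂ} (hf : ContDiff ℝ ∞ f) (s t : ℝ) :
    HasDerivAt (fun t => f (s, t)) (fderiv ℝ f (s, t) (0, 1)) t := by
  have h1 : HasFDerivAt f (fderiv ℝ f (s, t)) (s, t) :=
    (hf.differentiable (by simp) (s, t)).hasFDerivAt
  have h2 : HasDerivAt (fun t : ℝ => ((s, t) : ℝ × ℝ)) (0, 1) t :=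
    (hasDerivAt_const t s).prodMk (hasDerivAt_id t)
  exact h1.comp_hasDerivAt t h2

lemma ds_hasDeriv {f : ℝ × ℝ → ℂ} (hf : ContDiff ℝ ∞ f) (s t : ℝ) :
    HasDerivAt (fun s => f (s, t)) (fderiv ℝ f (s, t) (1, 0)) s := by
  have h1 : HasFDerivAt f (fderiv ℝ f (s, t)) (s, t) :=
    (hf.differentiable (by simp) (s, t)).hasFDerivAt
  have h2 : HasDerivAt (fun s : ℝ => ((s, t) : ℝ × ℝ)) (1, 0) s :=
    (hasDerivAt_id s).prodMk (hasDerivAt_const s t)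
  exact h1.comp_hasDerivAt s h2

lemma fderiv_contDiff {f : ℝ × ℝ → ℂ} (hf : ContDiff ℝ ∞ f) (v : ℝ × ℝ) :
    ContDiff ℝ ∞ (fun p => fderiv ℝ f p v) :=
  (hf.fderiv_right (m := ∞) (by simp)).clm_apply contDiff_const

lemma fderiv_compact {f : ℝ × ℝ → ℂ} (hf : HasCompactSupport f) (v : ℝ × ℝ) :
    HasCompactSupport (fun p => fderiv ℝ f p v) := hf.fderiv_apply ℝ v

lemma pF_hasDeriv {f : ℝ × ℝ → ℂ} (hf : ContDiff ℝ ∞ f) (hc : HasCompactSupport f) (k t : ℝ) :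
    HasDerivAt (pF f k) (pF (fun p => fderiv ℝ f p (0, 1)) k t) t := by
  have hd := fderiv_contDiff hf (0, 1)
  have hdc := fderiv_compact hc (0, 1)
  obtain ⟨C, hC⟩ := hd.continuous.bounded_above_of_compact_support hdc
  obtain ⟨M, -, hM⟩ := exists_box hdc
  rw [show pF f k = fun t => ∫ s : ℝ, (Real.fourierChar (-(s * k)) : ℂ) * f (s, t) from
    funext fun t => pF_eq f k t, pF_eq]
  have hcont : Continuous fun s : ℝ => (Real.fourierChar (-(s * k)) : ℂ) := by fun_prop
  refine (hasDerivAt_integral_of_dominated_loc_of_deriv_le (μ := volume) (s := univ)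
    (F := fun t s => (Real.fourierChar (-(s * k)) : ℂ) * f (s, t))
    (F' := fun t s => (Real.fourierChar (-(s * k)) : ℂ) * fderiv ℝ f (s, t) (0, 1))
    (bound := fun s => (Icc (-M) M).indicator (fun _ => C) s) univ_mem ?_ ?_ ?_ ?_ ?_ ?_).2
  · refine Eventually.of_forall fun t => ?_
    exact (hcont.mul (slice_contDiff hf t).continuous).aestronglyMeasurable
  · apply Continuous.integrable_of_hasCompactSupport
    · exact (hcont.mul (slice_contDiff hf t).continuous)
    · exact (slice_compact hc t).mul_left
  · exact (hcont.mul (slice_contDiff hd t).continuous).aestronglyMeasurable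
  · refine Eventually.of_forall fun s t _ => ?_
    rw [norm_mul, Circle.norm_coe, one_mul]
    by_cases h : fderiv ℝ f (s, t) (0, 1) = 0
    · rw [h, norm_zero]
      exact indicator_nonneg (fun _ _ => (norm_nonneg _).trans (hC (0, 0))) _
    · have hmem : s ∈ Icc (-M) M := abs_le.1 (hM s t h).1
      rw [indicator_of_mem hmem]
      exact hC _
  · rw [integrable_indicator_iff measurableSet_Icc]
    exact integrableOn_const (by simp)
  · exact Eventually.of_forall fun s t _ => (dt_hasDeriv hf s t).const_mul _

lemma pF_contDiff_nat (k : ℝ) (n : ℕ) : ∀ {f : ℝ × ℝ → ℂ} (_ : ContDiff ℝ ∞ f)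
    (_ : HasCompactSupport f), ContDiff ℝ n (pF f k) := by
  induction n with
  | zero =>
    intro f hf hc
    exact contDiff_zero.2
      (continuous_iff_continuousAt.2 fun t => (pF_hasDeriv hf hc k t).continuousAt)
  | succ n ih =>
    intro f hf hc
    push_cast
    rw [contDiff_succ_iff_deriv]
    refine ⟨fun t => (pF_hasDeriv hf hc k t).differentiableAt, by simp, ?_⟩
    rw [show deriv (pF f k) = pF (fun p => fderiv ℝ f p (0, 1)) k from
      funext fun t => (pF_hasDeriv hf hc k t).deriv]
    exact ih (fderiv_contDiff hf _) (fderiv_compact hc _)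

lemma pF_contDiff {f : ℝ × ℝ → ℂ} (hf : ContDiff ℝ ∞ f) (hc : HasCompactSupport f) (k : ℝ) :
    ContDiff ℝ ∞ (pF f k) := contDiff_infty.2 fun n => pF_contDiff_nat k n hf hc

lemma pF_compact {f : ℝ × ℝ → ℂ} (hc : HasCompactSupport f) (k : ℝ) :
    HasCompactSupport (pF f k) := by
  obtain ⟨M, -, h⟩ := exists_box hc
  apply HasCompactSupport.intro (isCompact_Icc (a := -M) (b := M))
  intro t ht
  have : ∀ s, f (s, t) = 0 := by
    intro s
    by_contra h'
    exact ht (abs_le.1 (h s t h').2)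
  rw [pF_eq]
  simp [this]

lemma pF_ds {f : ℝ × ℝ → ℂ} (hf : ContDiff ℝ ∞ f) (hc : HasCompactSupport f) (k t : ℝ) :
    pF (fun p => fderiv ℝ f p (1, 0)) k t = (2 * π * Complex.I * k) * pF f k t := by
  have h := Real.fourier_deriv (f := fun s => f (s, t))
    ((slice_contDiff hf t).continuous.integrable_of_hasCompactSupport (slice_compact hc t))
    ((slice_contDiff hf t).differentiable (by simp)) ?_
  · have e : deriv (fun s => f (s, t)) = fun s => fderiv ℝ f (s, t) (1, 0) :=
      funext fun s => (ds_hasDeriv hf s t).deriv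
    rw [e] at h
    have := congrFun h k
    simpa [pF] using this
  · have e : deriv (fun s => f (s, t)) = fun s => fderiv ℝ f (s, t) (1, 0) :=
      funext fun s => (ds_hasDeriv hf s t).deriv
    rw [e]
    exact (slice_contDiff (fderiv_contDiff hf _) t).continuous.integrable_of_hasCompactSupport
      (slice_compact (fderiv_compact hc _) t)

lemma pF_plancherel {f : ℝ × ℝ → ℂ} (hf : ContDiff ℝ ∞ f) (hc : HasCompactSupport f) (t : ℝ) :
    Integrable (fun k => ‖pF f k t‖ ^ 2) ∧ ∫ k, ‖pF f k t‖ ^ 2 = ∫ s, ‖f (s, t)‖ ^ 2 := by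
  let S := (slice_compact hc t).toSchwartzMap (slice_contDiff hf t)
  have hS : (S : ℝ → ℂ) = fun s => f (s, t) := rfl
  have hk : ∀ k, 𝓕 S k = pF f k t := fun k => by
    rw [SchwartzMap.fourier_coe, hS]; rfl
  constructor
  · have := (𝓕 S).memLp 2 volume
    have h2 := this.integrable_norm_pow (by simp)
    simpa [hk] using h2
  · have := SchwartzMap.integral_norm_sq_fourier S
    simpa [hk, hS] using this

lemma pF_measurable {f : ℝ × ℝ → ℂ} (hf : ContDiff ℝ ∞ f) :
    StronglyMeasurable (fun q : ℝ × ℝ => pF f q.1 q.2) := by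
  have : Continuous (fun q : (ℝ × ℝ) × ℝ =>
      (Real.fourierChar (-(q.2 * q.1.1)) : ℂ) * f (q.2, q.1.2)) := by
    have := hf.continuous
    fun_prop
  have := this.stronglyMeasurable.integral_prod_right' (ν := volume)
  simpa [pF_eq] using this

lemma sq_compact {X : Type*} [TopologicalSpace X] {f : X → ℂ} (hc : HasCompactSupport f) :
    HasCompactSupport (fun p => ‖f p‖ ^ 2) := by
  apply hc.mono
  intro p hp
  simp only [Function.mem_support] at hp ⊢
  intro h
  simp [h] at hp

lemma ofReal_contDiff {E : Type*} [NormedAddCommGroup E] [NormedSpace ℝ E] {f : E → ℝ}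
    (hf : ContDiff ℝ ∞ f) : ContDiff ℝ ∞ (fun p => (f p : ℂ)) :=
  Complex.ofRealCLM.contDiff.comp hf

lemma sq_integrable {f : ℝ × ℝ → ℂ} (hf : ContDiff ℝ ∞ f) (hc : HasCompactSupport f) :
    Integrable (fun p => ‖f p‖ ^ 2) :=
  (hf.continuous.norm.pow 2).integrable_of_hasCompactSupport
    (sq_compact hc)

/-- Product measure on the half-plane. -/
abbrev hpm : Measure (ℝ × ℝ) := (volume : Measure ℝ).prod (volume.restrict (Ioi (0 : ℝ)))

lemma hpm_eq : hpm = (volume : Measure (ℝ × ℝ)).restrict {p | 0 ≤ p.2} := by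
  have : {p : ℝ × ℝ | 0 ≤ p.2} = univ ×ˢ Ici (0 : ℝ) := by ext; simp
  rw [this, Measure.volume_eq_prod, ← Measure.prod_restrict, Measure.restrict_univ, hpm,
    restrict_Ioi_eq_restrict_Ici]

lemma sq_integrable_hpm {f : ℝ × ℝ → ℂ} (hf : ContDiff ℝ ∞ f) (hc : HasCompactSupport f) :
    Integrable (fun p => ‖f p‖ ^ 2) hpm := by
  rw [hpm_eq]
  exact (sq_integrable hf hc).restrict

lemma pF_hpm {f : ℝ × ℝ → ℂ} (hf : ContDiff ℝ ∞ f) (hc : HasCompactSupport f) :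
    Integrable (fun q : ℝ × ℝ => ‖pF f q.1 q.2‖ ^ 2) hpm ∧
      ∫ q, ‖pF f q.1 q.2‖ ^ 2 ∂hpm = ∫ p, ‖f p‖ ^ 2 ∂hpm := by
  have hi := sq_integrable_hpm hf hc
  have h1 : Integrable (fun q : ℝ × ℝ => ‖pF f q.1 q.2‖ ^ 2) hpm := by
    have hm : AEStronglyMeasurable (fun q : ℝ × ℝ => ‖pF f q.1 q.2‖ ^ 2) hpm :=
      ((pF_measurable hf).norm.pow 2).aestronglyMeasurable
    rw [integrable_prod_iff' hm]
    constructor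
    · exact Eventually.of_forall fun t => (pF_plancherel hf hc t).1
    · have := hi.integral_prod_right
      simpa [(pF_plancherel hf hc _).2] using this
  refine ⟨h1, ?_⟩
  rw [integral_prod_symm _ h1, integral_prod_symm _ hi]
  simp only [(pF_plancherel hf hc _).2]

/-- Energy density in tangential/normal coordinates `(s,t)`. -/
def dens (γ τ : ℝ) (w : ℝ × ℝ → ℂ) (p : ℝ × ℝ) : ℝ :=
  ‖(-Complex.I) * fderiv ℝ w p (1, 0) - ((Real.cos γ * p.2 : ℝ) : ℂ) * w p‖ ^ 2
    + ‖fderiv ℝ w p (0, 1)‖ ^ 2 + (p.2 * Real.sin γ - τ) ^ 2 * ‖w p‖ ^ 2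

lemma halfplane (γ τ : ℝ) {w : ℝ × ℝ → ℂ} (hw : ContDiff ℝ ∞ w) (hc : HasCompactSupport w) :
    Ebot γ τ * ∫ p, ‖w p‖ ^ 2 ∂hpm ≤ ∫ p, dens γ τ w p ∂hpm := by
  set f1 : ℝ × ℝ → ℂ := fun p =>
    (-Complex.I) * fderiv ℝ w p (1, 0) - ((Real.cos γ * p.2 : ℝ) : ℂ) * w p with hf1
  set f2 : ℝ × ℝ → ℂ := fun p => fderiv ℝ w p (0, 1) with hf2
  set f3 : ℝ × ℝ → ℂ := fun p => ((p.2 * Real.sin γ - τ : ℝ) : ℂ) * w p with hf3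
  have s1 : ContDiff ℝ ∞ f1 := by
    have h := fderiv_contDiff hw (1, 0)
    have h2 : ContDiff ℝ ∞ (fun p : ℝ × ℝ => ((Real.cos γ * p.2 : ℝ) : ℂ)) :=
      ofReal_contDiff (by fun_prop)
    exact (contDiff_const.mul h).sub (h2.mul hw)
  have s2 : ContDiff ℝ ∞ f2 := fderiv_contDiff hw _
  have s3 : ContDiff ℝ ∞ f3 := by
    have h2 : ContDiff ℝ ∞ (fun p : ℝ × ℝ => ((p.2 * Real.sin γ - τ : ℝ) : ℂ)) :=
      ofReal_contDiff (by fun_prop)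
    exact h2.mul hw
  have c1 : HasCompactSupport f1 := ((fderiv_compact hc _).mul_left).sub hc.mul_left
  have c2 : HasCompactSupport f2 := fderiv_compact hc _
  have c3 : HasCompactSupport f3 := hc.mul_left
  have e1 : ∀ k t, pF f1 k t = ((2 * π * k - Real.cos γ * t : ℝ) : ℂ) * pF w k t := by
    intro k t
    have h := pF_ds hw hc k t
    have i1 : Integrable fun s : ℝ => (Real.fourierChar (-(s * k)) : ℂ) *
        fderiv ℝ w (s, t) (1, 0) := by
      apply Continuous.integrable_of_hasCompactSupport
      · have := (slice_contDiff (fderiv_contDiff hw (1, 0)) t).continuous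
        fun_prop
      · exact (slice_compact (fderiv_compact hc (1, 0)) t).mul_left
    have i2 : Integrable fun s : ℝ => (Real.fourierChar (-(s * k)) : ℂ) * w (s, t) := by
      apply Continuous.integrable_of_hasCompactSupport
      · have := (slice_contDiff hw t).continuous
        fun_prop
      · exact (slice_compact hc t).mul_left
    have : pF f1 k t = (-Complex.I) * pF (fun p => fderiv ℝ w p (1, 0)) k t
        - ((Real.cos γ * t : ℝ) : ℂ) * pF w k t := by
      rw [pF_eq, pF_eq, pF_eq, ← integral_const_mul, ← integral_const_mul, ← integral_sub]
      · congr 1; ext s; simp only [hf1]; ring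
      · exact i1.const_mul _
      · exact i2.const_mul _
    rw [this, h]
    push_cast
    linear_combination (-2 * π * k * pF w k t) * Complex.I_mul_I
  have e2 : ∀ k t, pF f2 k t = deriv (pF w k) t := fun k t => (pF_hasDeriv hw hc k t).deriv.symm
  have e3 : ∀ k t, pF f3 k t = ((t * Real.sin γ - τ : ℝ) : ℂ) * pF w k t := by
    intro k t
    rw [pF_eq, pF_eq, ← integral_const_mul]
    congr 1; ext s; simp only [hf3]; ring
  have hd : ∀ p, dens γ τ w p = ‖f1 p‖ ^ 2 + ‖f2 p‖ ^ 2 + ‖f3 p‖ ^ 2 := by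
    intro p
    simp only [dens, hf1, hf2, hf3, norm_mul, mul_pow, Complex.norm_real, Real.norm_eq_abs,
      sq_abs]
  simp only [hd]
  have J12 : Integrable (fun p => ‖f1 p‖ ^ 2 + ‖f2 p‖ ^ 2) hpm :=
    (sq_integrable_hpm s1 c1).add (sq_integrable_hpm s2 c2)
  rw [integral_add J12
    (sq_integrable_hpm s3 c3), integral_add (sq_integrable_hpm s1 c1) (sq_integrable_hpm s2 c2),
    ← (pF_hpm s1 c1).2, ← (pF_hpm s2 c2).2, ← (pF_hpm s3 c3).2, ← (pF_hpm hw hc).2]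
  have I1 := (pF_hpm s1 c1).1
  have I2 := (pF_hpm s2 c2).1
  have I3 := (pF_hpm s3 c3).1
  have I0 := (pF_hpm hw hc).1
  have I12 : Integrable (fun q : ℝ × ℝ => ‖pF f1 q.1 q.2‖ ^ 2 + ‖pF f2 q.1 q.2‖ ^ 2) hpm :=
    I1.add I2
  have I123 : Integrable (fun q : ℝ × ℝ => ‖pF f1 q.1 q.2‖ ^ 2 + ‖pF f2 q.1 q.2‖ ^ 2
    + ‖pF f3 q.1 q.2‖ ^ 2) hpm := I12.add I3
  rw [← integral_add I1 I2, ← integral_add I12 I3, ← integral_const_mul,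
    integral_prod _ (I0.const_mul _), integral_prod _ I123]
  apply integral_mono
  · exact (I0.const_mul _).integral_prod_left
  · exact I123.integral_prod_left
  intro k
  simp only
  have hg := pF_contDiff hw hc k
  have hgc := pF_compact hc k
  set g := pF w k with hgdef
  set ξ' := (2 * π * k) * Real.cos γ + τ * Real.sin γ with hξ'
  set d := ((2 * π * k) * Real.sin γ - τ * Real.cos γ) with hdd
  have hmain := deGennes_le ξ' g hg hgc
  have hE := Ebot_le γ τ (2 * π * k)
  have hg2 : Integrable (fun t => ‖g t‖ ^ 2) (volume.restrict (Ioi 0)) :=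
    ((hg.continuous.norm.pow 2).integrable_of_hasCompactSupport
      (sq_compact hgc)).restrict
  have hg3 : Integrable (fun t => ‖deriv g t‖ ^ 2 + (t - ξ') ^ 2 * ‖g t‖ ^ 2)
      (volume.restrict (Ioi 0)) := by
    have hdc : Continuous (deriv g) := hg.continuous_deriv (by simp)
    apply Integrable.restrict
    apply Integrable.add
    · exact ((hdc.norm.pow 2).integrable_of_hasCompactSupport
      (sq_compact hgc.deriv))
    · apply Continuous.integrable_of_hasCompactSupport
      · have := hg.continuous
        fun_prop
      · exact (sq_compact hgc).mul_left
  have key : ∀ t, ‖pF f1 k t‖ ^ 2 + ‖pF f2 k t‖ ^ 2 + ‖pF f3 k t‖ ^ 2 =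
      (‖deriv g t‖ ^ 2 + (t - ξ') ^ 2 * ‖g t‖ ^ 2) + d ^ 2 * ‖g t‖ ^ 2 := by
    intro t
    rw [e1, e2, e3, norm_mul, norm_mul, mul_pow, mul_pow, Complex.norm_real, Complex.norm_real,
      Real.norm_eq_abs, Real.norm_eq_abs, sq_abs, sq_abs, ← hgdef]
    have hcs := Real.sin_sq_add_cos_sq γ
    simp only [hξ', hdd]
    linear_combination (t ^ 2 - (2 * π * k) ^ 2 - τ ^ 2) * ‖g t‖ ^ 2 * hcs
  simp only [key]
  rw [integral_add hg3 (hg2.const_mul _), integral_const_mul, integral_const_mul]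
  have hn : 0 ≤ ∫ t in Ioi (0 : ℝ), ‖g t‖ ^ 2 := integral_nonneg fun t => by positivity
  nlinarith [mul_le_mul_of_nonneg_right hE hn]

end MagWedge

namespace MagWedge

open scoped FourierTransform ContDiff Topology

/-- The orthogonal involution to tangential/normal coordinates. -/
def rhoL (a : ℝ) : (ℝ × ℝ) →ₗ[ℝ] (ℝ × ℝ) where
  toFun p := (Real.cos a * p.1 + Real.sin a * p.2, Real.sin a * p.1 - Real.cos a * p.2)
  map_add' p q := by ext <;> simp <;> ring
  map_smul' r p := by ext <;> simp <;> ring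

/-- Continuous linear version. -/
def rho (a : ℝ) : (ℝ × ℝ) →L[ℝ] (ℝ × ℝ) := (rhoL a).toContinuousLinearMap

lemma rho_apply (a : ℝ) (p : ℝ × ℝ) : rho a p =
    (Real.cos a * p.1 + Real.sin a * p.2, Real.sin a * p.1 - Real.cos a * p.2) := rfl

lemma rho_rho (a : ℝ) (p : ℝ × ℝ) : rho a (rho a p) = p := by
  have h := Real.sin_sq_add_cos_sq a
  rw [rho_apply, rho_apply]
  ext
  · simp only; linear_combination p.1 * h
  · simp only; linear_combination p.2 * h

lemma rho_mp (a : ℝ) : MeasurePreserving (rho a) (volume : Measure (ℝ × ℝ)) volume := by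
  refine ⟨(rho a).continuous.measurable, ?_⟩
  have hd : LinearMap.det (rhoL a) * LinearMap.det (rhoL a) = 1 := by
    rw [← LinearMap.det_comp]
    have : rhoL a ∘ₗ rhoL a = LinearMap.id := LinearMap.ext fun p => rho_rho a p
    rw [this, LinearMap.det_id]
  have h0 : LinearMap.det (rhoL a) ≠ 0 := by
    intro h; simp [h] at hd
  have := Measure.map_linearMap_addHaar_eq_smul_addHaar (volume : Measure (ℝ × ℝ)) h0
  have h1 : |(LinearMap.det (rhoL a))⁻¹| = 1 := by
    rw [abs_inv]
    rcases mul_self_eq_one_iff.1 hd with h | h <;> simp [h]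
  rw [h1, ENNReal.ofReal_one, one_smul] at this
  exact this

/-- Homeomorphism version. -/
def rhoH (a : ℝ) : (ℝ × ℝ) ≃ₜ (ℝ × ℝ) where
  toFun := rho a
  invFun := rho a
  left_inv := rho_rho a
  right_inv := rho_rho a
  continuous_toFun := (rho a).continuous
  continuous_invFun := (rho a).continuous

/-- The sector in the new coordinates. -/
def Dsec (α : ℝ) : Set (ℝ × ℝ) :=
  {p | 0 ≤ p.2 ∧ 0 ≤ p.1 * Real.sin α - p.2 * Real.cos α}

lemma Dsec_meas (α : ℝ) : MeasurableSet (Dsec α) := by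
  apply IsClosed.measurableSet
  have h1 : IsClosed {p : ℝ × ℝ | 0 ≤ p.2} := isClosed_le continuous_const continuous_snd
  have h2 : IsClosed {p : ℝ × ℝ | 0 ≤ p.1 * Real.sin α - p.2 * Real.cos α} :=
    isClosed_le continuous_const (by fun_prop)
  exact h1.inter h2

lemma sector_eq (α : ℝ) (hα : α ∈ Set.Ioo 0 π) : sector α = rho (α / 2) ⁻¹' Dsec α := by
  ext ⟨x, y⟩
  have hc : 0 < Real.cos (α / 2) := Real.cos_pos_of_mem_Ioo ⟨by linarith [hα.1, Real.pi_pos],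
    by linarith [hα.2]⟩
  have h := Real.sin_sq_add_cos_sq (α / 2)
  have hs2 : Real.sin α = 2 * Real.sin (α / 2) * Real.cos (α / 2) := by
    rw [← Real.sin_two_mul]; congr 1; ring
  have hc2 : Real.cos α = 2 * Real.cos (α / 2) ^ 2 - 1 := by
    rw [← Real.cos_two_mul]; congr 1; ring
  simp only [sector, Dsec, mem_ofPred_eq, mem_preimage, rho_apply, Real.tan_eq_sin_div_cos,
    ← mul_div_assoc]
  rw [le_div_iff₀ hc, hs2, hc2]
  generalize Real.cos (α / 2) = c at *
  generalize Real.sin (α / 2) = σ at *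
  have e : (c * x + σ * y) * (2 * σ * c) - (σ * x - c * y) * (2 * c ^ 2 - 1)
      = σ * x + c * y := by
    linear_combination (2 * c * y) * h
  rw [e]
  rw [show |y| * c = |y * c| by rw [abs_mul, abs_of_pos hc], abs_le]
  constructor
  · rintro ⟨h1, h2⟩; constructor <;> linarith
  · rintro ⟨h1, h2⟩; constructor <;> linarith

/-- The gauge phase. -/
def phase (a b : ℝ) (p : ℝ × ℝ) : ℝ :=
  b * (-(Real.sin a) ^ 2 * p.1 * p.2 + Real.sin a * Real.cos a * (p.2 ^ 2 - p.1 ^ 2) / 2)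

lemma phase_contDiff (a b : ℝ) : ContDiff ℝ ∞ (phase a b) := by
  unfold phase; fun_prop

/-- Twisted function. -/
def twist (a b : ℝ) (w : ℝ × ℝ → ℂ) (x : ℝ × ℝ) : ℂ :=
  Complex.exp ((phase a b (rho a x) : ℝ) * Complex.I) * w (rho a x)

lemma twist_norm (a b : ℝ) (w : ℝ × ℝ → ℂ) (x : ℝ × ℝ) : ‖twist a b w x‖ = ‖w (rho a x)‖ := by
  rw [twist, norm_mul, Complex.norm_exp_ofReal_mul_I, one_mul]

lemma twist_contDiff (a b : ℝ) {w : ℝ × ℝ → ℂ} (hw : ContDiff ℝ ∞ w) :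
    ContDiff ℝ ∞ (twist a b w) := by
  have h1 : ContDiff ℝ ∞ (fun x => phase a b (rho a x)) :=
    (phase_contDiff a b).comp (rho a).contDiff
  have h2 : ContDiff ℝ ∞ (fun x => w (rho a x)) := hw.comp (rho a).contDiff
  exact (((ofReal_contDiff h1).mul contDiff_const).cexp).mul h2

/-- Inverse twist. -/
def untwist (a b : ℝ) (u : ℝ × ℝ → ℂ) (p : ℝ × ℝ) : ℂ :=
  Complex.exp ((-phase a b p : ℝ) * Complex.I) * u (rho a p)

lemma untwist_contDiff (a b : ℝ) {u : ℝ × ℝ → ℂ} (hu : ContDiff ℝ ∞ u) :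
    ContDiff ℝ ∞ (untwist a b u) := by
  have h1 : ContDiff ℝ ∞ (fun x => -phase a b x) := (phase_contDiff a b).neg
  have h2 : ContDiff ℝ ∞ (fun x => u (rho a x)) := hu.comp (rho a).contDiff
  exact (((ofReal_contDiff h1).mul contDiff_const).cexp).mul h2

lemma twist_untwist (a b : ℝ) (u : ℝ × ℝ → ℂ) : twist a b (untwist a b u) = u := by
  ext x
  rw [twist, untwist, rho_rho, ← mul_assoc, ← Complex.exp_add]
  simp

lemma twist_compact (a b : ℝ) {w : ℝ × ℝ → ℂ} (hw : HasCompactSupport w) :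
    HasCompactSupport (twist a b w) :=
  (hw.comp_homeomorph (rhoH a)).mul_left

lemma untwist_compact (a b : ℝ) {w : ℝ × ℝ → ℂ} (hw : HasCompactSupport w) :
    HasCompactSupport (untwist a b w) :=
  (hw.comp_homeomorph (rhoH a)).mul_left

lemma untwist_ne (a b : ℝ) {u : ℝ × ℝ → ℂ} {R : ℝ}
    (hu : tsupport u ⊆ {x : ℝ × ℝ | R ^ 2 < x.1 ^ 2 + x.2 ^ 2}) (p : ℝ × ℝ)
    (hp : untwist a b u p ≠ 0) : R ^ 2 < p.1 ^ 2 + p.2 ^ 2 := by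
  have : u (rho a p) ≠ 0 := right_ne_zero_of_mul hp
  have := hu (subset_tsupport _ this)
  simp only [mem_ofPred_eq, rho_apply] at this
  have h := Real.sin_sq_add_cos_sq a
  have e : (Real.cos a * p.1 + Real.sin a * p.2) ^ 2 + (Real.sin a * p.1 - Real.cos a * p.2) ^ 2
    = p.1 ^ 2 + p.2 ^ 2 := by linear_combination (p.1 ^ 2 + p.2 ^ 2) * h
  linarith

lemma rot_norm (c σ : ℝ) (h : σ ^ 2 + c ^ 2 = 1) (X Y : ℂ) :
    ‖(c : ℂ) * X + σ * Y‖ ^ 2 + ‖Complex.I * (σ * X - c * Y)‖ ^ 2 = ‖X‖ ^ 2 + ‖Y‖ ^ 2 := by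
  rw [norm_mul, Complex.norm_I, one_mul]
  simp only [← Complex.normSq_eq_norm_sq, Complex.normSq_apply]
  simp
  linear_combination (X.re ^ 2 + X.im ^ 2 + Y.re ^ 2 + Y.im ^ 2) * h

lemma twist_fderiv (a b : ℝ) {w : ℝ × ℝ → ℂ} (hw : ContDiff ℝ ∞ w) (x v : ℝ × ℝ) :
    fderiv ℝ (twist a b w) x v = Complex.exp ((phase a b (rho a x) : ℝ) * Complex.I) *
      (((fderiv ℝ (phase a b) (rho a x) (rho a v) : ℝ) : ℂ) * Complex.I * w (rho a x)
        + fderiv ℝ w (rho a x) (rho a v)) := by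
  have hφ : HasFDerivAt (fun x => phase a b (rho a x))
      ((fderiv ℝ (phase a b) (rho a x)).comp (rho a)) x :=
    (((phase_contDiff a b).differentiable (by simp) _).hasFDerivAt).comp x (rho a).hasFDerivAt
  have hφ2 := Complex.ofRealCLM.hasFDerivAt.comp x hφ
  have h1 := ((hφ2.mul_const Complex.I).cexp)
  have h2 : HasFDerivAt (fun x => w (rho a x)) ((fderiv ℝ w (rho a x)).comp (rho a)) x :=
    ((hw.differentiable (by simp) _).hasFDerivAt).comp x (rho a).hasFDerivAt
  have h3 := (h1.mul h2).fderiv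
  have h4 : fderiv ℝ (twist a b w) x = _ := h3
  rw [h4]
  simp
  ring

lemma phase_fderiv (a b : ℝ) (p v : ℝ × ℝ) : fderiv ℝ (phase a b) p v =
    b * (-(Real.sin a) ^ 2 * p.2 - Real.sin a * Real.cos a * p.1) * v.1 +
    b * (-(Real.sin a) ^ 2 * p.1 + Real.sin a * Real.cos a * p.2) * v.2 := by
  have h1 : HasFDerivAt (fun p : ℝ × ℝ => p.1) (ContinuousLinearMap.fst ℝ ℝ ℝ) p := hasFDerivAt_fst
  have h2 : HasFDerivAt (fun p : ℝ × ℝ => p.2) (ContinuousLinearMap.snd ℝ ℝ ℝ) p := hasFDerivAt_snd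
  have h := (((h1.const_mul (-(Real.sin a) ^ 2)).mul h2).add
    ((((h2.pow 2).sub (h1.pow 2)).const_mul (Real.sin a * Real.cos a)).mul_const
      ((2 : ℝ)⁻¹))).const_mul b
  have h4 : fderiv ℝ (phase a b) p = _ := h.fderiv
  rw [h4]
  simp
  ring

lemma twist_dens (α γ τ : ℝ) {w : ℝ × ℝ → ℂ} (hw : ContDiff ℝ ∞ w) (x : ℝ × ℝ) :
    ‖(-Complex.I) * fderiv ℝ (twist (α / 2) (Real.cos γ) w) x (1, 0)
        + ((x.2 * Real.cos γ : ℝ) : ℂ) * twist (α / 2) (Real.cos γ) w x‖ ^ 2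
      + ‖fderiv ℝ (twist (α / 2) (Real.cos γ) w) x (0, 1)‖ ^ 2
      + (x.1 * (Real.sin γ * Real.sin (α / 2)) - x.2 * (Real.sin γ * Real.cos (α / 2)) - τ) ^ 2
        * ‖twist (α / 2) (Real.cos γ) w x‖ ^ 2 = dens γ τ w (rho (α / 2) x) := by
  set a := α / 2
  set b := Real.cos γ with hb
  rw [twist_norm, twist_fderiv a b hw, twist_fderiv a b hw, phase_fderiv, phase_fderiv, twist]
  have hx : x = rho a (rho a x) := (rho_rho a x).symm
  set q := rho a x with hq
  have hx2 : x.2 = Real.sin a * q.1 - Real.cos a * q.2 := by rw [hx, rho_apply]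
  have hq2 : q.2 = Real.sin a * x.1 - Real.cos a * x.2 := by rw [hq, rho_apply]
  have hs := Real.sin_sq_add_cos_sq a
  have r1 : rho a (1, 0) = (Real.cos a, Real.sin a) := by simp [rho_apply]
  have r2 : rho a (0, 1) = (Real.sin a, -Real.cos a) := by simp [rho_apply]
  have lin : ∀ y z : ℝ, fderiv ℝ w q (y, z) = y * fderiv ℝ w q (1, 0) + z * fderiv ℝ w q (0, 1) := by
    intro y z
    have : ((y, z) : ℝ × ℝ) = y • (1, 0) + z • (0, 1) := by ext <;> simp
    rw [this, map_add, map_smul, map_smul]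
    simp
  rw [r1, r2, lin (Real.cos a), lin (Real.sin a)]
  set Ws := fderiv ℝ w q (1, 0)
  set Wt := fderiv ℝ w q (0, 1)
  set e := Complex.exp ((phase a b q : ℝ) * Complex.I) with he
  have hen : ‖e‖ = 1 := Complex.norm_exp_ofReal_mul_I _
  set X := (-Complex.I) * Ws - ((b * q.2 : ℝ) : ℂ) * w q with hX
  set Y := (-Complex.I) * Wt with hY
  have hsC : (Real.sin a : ℂ) ^ 2 + (Real.cos a : ℂ) ^ 2 = 1 := by exact_mod_cast hs
  have E1 : (-Complex.I) * (e * (((b * (-(Real.sin a) ^ 2 * q.2 - Real.sin a * Real.cos a * q.1)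
        * Real.cos a + b * (-(Real.sin a) ^ 2 * q.1 + Real.sin a * Real.cos a * q.2)
        * Real.sin a : ℝ) : ℂ) * Complex.I * w q + (Real.cos a * Ws + Real.sin a * Wt)))
        + ((x.2 * b : ℝ) : ℂ) * (e * w q) = e * (Real.cos a * X + Real.sin a * Y) := by
    rw [hx2, hX, hY]
    simp only [Complex.ofReal_add, Complex.ofReal_sub, Complex.ofReal_mul, Complex.ofReal_neg,
      Complex.ofReal_pow]
    linear_combination (- e * (b * (-(Real.sin a : ℂ) ^ 2 * q.2 - Real.sin a * Real.cos a * q.1)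
        * Real.cos a + b * (-(Real.sin a : ℂ) ^ 2 * q.1 + Real.sin a * Real.cos a * q.2)
        * Real.sin a) * w q) * Complex.I_mul_I - e * b * Real.sin a * q.1 * w q * hsC
  have E2 : e * (((b * (-(Real.sin a) ^ 2 * q.2 - Real.sin a * Real.cos a * q.1)
        * Real.sin a + b * (-(Real.sin a) ^ 2 * q.1 + Real.sin a * Real.cos a * q.2)
        * (-Real.cos a) : ℝ) : ℂ) * Complex.I * w q + (Real.sin a * Ws + ((-Real.cos a : ℝ) : ℂ) * Wt))
        = e * (Complex.I * (Real.sin a * X - Real.cos a * Y)) := by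
    rw [hX, hY]
    simp only [Complex.ofReal_add, Complex.ofReal_sub, Complex.ofReal_mul, Complex.ofReal_neg,
      Complex.ofReal_pow]
    linear_combination (e * (Real.sin a * Ws - Real.cos a * Wt)) * Complex.I_mul_I
      - e * b * Real.sin a * q.2 * Complex.I * w q * hsC
  simp only at E1 E2 ⊢
  rw [E1, E2, norm_mul, norm_mul, hen, one_mul, one_mul, rot_norm _ _ hs]
  have hYn : ‖Y‖ = ‖Wt‖ := by rw [hY, norm_mul, norm_neg, Complex.norm_I, one_mul]
  have hV : x.1 * (Real.sin γ * Real.sin a) - x.2 * (Real.sin γ * Real.cos a) - τ =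
      q.2 * Real.sin γ - τ := by rw [hq2]; ring
  rw [hYn, hV, dens]

lemma twist_energy (α γ τ : ℝ) (hα : α ∈ Set.Ioo 0 π) {w : ℝ × ℝ → ℂ} (hw : ContDiff ℝ ∞ w) :
    energy2D (sector α) (Real.sin γ * Real.cos (α / 2)) (Real.sin γ * Real.sin (α / 2))
      (Real.cos γ) τ (twist (α / 2) (Real.cos γ) w) = ∫ p in Dsec α, dens γ τ w p := by
  unfold energy2D
  rw [sector_eq α hα]
  simp only [twist_dens α γ τ hw]
  exact (rho_mp (α / 2)).setIntegral_preimage_emb (rhoH (α / 2)).measurableEmbedding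
    (dens γ τ w) (Dsec α)

lemma twist_norm2D (α b : ℝ) (hα : α ∈ Set.Ioo 0 π) (w : ℝ × ℝ → ℂ) :
    norm2D (sector α) (twist (α / 2) b w) = ∫ p in Dsec α, ‖w p‖ ^ 2 := by
  unfold norm2D
  rw [sector_eq α hα]
  simp only [twist_norm]
  exact (rho_mp (α / 2)).setIntegral_preimage_emb (rhoH (α / 2)).measurableEmbedding
    (fun p => ‖w p‖ ^ 2) (Dsec α)

end MagWedge

namespace MagWedge

open scoped FourierTransform ContDiff Topology

lemma st_deriv (y : ℝ) :
    HasDerivAt Real.smoothTransition (deriv Real.smoothTransition y) y :=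
  ((Real.smoothTransition.contDiff (n := 1)).differentiable (by simp) y).hasDerivAt

lemma st_deriv_zero {y : ℝ} (hy : y ≤ 0) : deriv Real.smoothTransition y = 0 := by
  apply IsLocalMin.deriv_eq_zero
  refine Eventually.of_forall fun z => ?_
  simp only [Real.smoothTransition.zero_of_nonpos hy]
  exact Real.smoothTransition.nonneg z

lemma st_deriv_one {y : ℝ} (hy : 1 ≤ y) : deriv Real.smoothTransition y = 0 := by
  apply IsLocalMax.deriv_eq_zero
  refine Eventually.of_forall fun z => ?_
  simp only [Real.smoothTransition.one_of_one_le hy]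
  exact Real.smoothTransition.le_one z

lemma st_deriv_bdd : ∃ K : ℝ, ∀ y, |deriv Real.smoothTransition y| ≤ K := by
  have hc : Continuous (deriv Real.smoothTransition) :=
    (Real.smoothTransition.contDiff (n := 1)).continuous_deriv (by simp)
  obtain ⟨K, hK⟩ := hc.bounded_above_of_compact_support
    (HasCompactSupport.intro (isCompact_Icc (a := (0 : ℝ)) (b := 1)) (by
      intro x hx
      by_cases h : x ≤ 0
      · exact st_deriv_zero h
      · apply st_deriv_one
        by_contra h'
        exact hx ⟨by linarith, by linarith⟩))
  exact ⟨K, hK⟩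

lemma ims_alg (c s d : ℝ) (h : s ^ 2 + c ^ 2 = 1) (A W : ℂ) :
    ‖((-(s * d) : ℝ) : ℂ) * A + (c : ℂ) * W‖ ^ 2 ≤ ‖W‖ ^ 2 + d ^ 2 * ‖A‖ ^ 2 := by
  have e : ‖((-(s * d) : ℝ) : ℂ) * A + (c : ℂ) * W‖ ^ 2 +
      ‖((c * d : ℝ) : ℂ) * A + (s : ℂ) * W‖ ^ 2 = ‖W‖ ^ 2 + d ^ 2 * ‖A‖ ^ 2 := by
    simp only [← Complex.normSq_eq_norm_sq, Complex.normSq_apply, Complex.add_re, Complex.add_im,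
      Complex.re_ofReal_mul, Complex.im_ofReal_mul]
    linear_combination (W.re ^ 2 + W.im ^ 2 + d ^ 2 * (A.re ^ 2 + A.im ^ 2)) * h
  have := sq_nonneg ‖((c * d : ℝ) : ℂ) * A + (s : ℂ) * W‖
  linarith

/-- The angle of the quadratic partition of unity. -/
def ang (L t : ℝ) : ℝ := π / 2 * Real.smoothTransition (t / L - 1)

lemma ang_contDiff (L : ℝ) : ContDiff ℝ ∞ (ang L) := by
  unfold ang
  have h : ContDiff ℝ ∞ Real.smoothTransition := Real.smoothTransition.contDiff
  have h2 : ContDiff ℝ ∞ (fun t : ℝ => t / L - 1) := (contDiff_id.div_const L).sub contDiff_const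
  exact contDiff_const.mul (h.comp h2)

lemma ang_deriv (L t : ℝ) :
    HasDerivAt (ang L) (π / 2 * (deriv Real.smoothTransition (t / L - 1) * (1 / L))) t := by
  have h2 : HasDerivAt (fun t : ℝ => t / L - 1) (1 / L) t :=
    ((hasDerivAt_id t).div_const L).sub_const 1
  exact ((st_deriv (t / L - 1)).comp t h2).const_mul (π / 2)

/-- The cut-off function. -/
def cutv (L : ℝ) (w : ℝ × ℝ → ℂ) (p : ℝ × ℝ) : ℂ :=
  ((Real.smoothTransition (p.1 / L) * Real.cos (ang L p.2) : ℝ) : ℂ) * w p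

lemma cutv_contDiff (L : ℝ) {w : ℝ × ℝ → ℂ} (hw : ContDiff ℝ ∞ w) : ContDiff ℝ ∞ (cutv L w) := by
  have h : ContDiff ℝ ∞ Real.smoothTransition := Real.smoothTransition.contDiff
  have h1 : ContDiff ℝ ∞ (fun p : ℝ × ℝ => Real.smoothTransition (p.1 / L)) :=
    h.comp (contDiff_fst.div_const L)
  have h2 : ContDiff ℝ ∞ (fun p : ℝ × ℝ => Real.cos (ang L p.2)) :=
    ((ang_contDiff L).comp contDiff_snd).cos
  exact (ofReal_contDiff (h1.mul h2)).mul hw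

lemma cutv_compact (L : ℝ) {w : ℝ × ℝ → ℂ} (hw : HasCompactSupport w) :
    HasCompactSupport (cutv L w) := hw.mul_left

lemma cutv_dt (L : ℝ) {w : ℝ × ℝ → ℂ} (hw : ContDiff ℝ ∞ w) (s t : ℝ) :
    fderiv ℝ (cutv L w) (s, t) (0, 1) = (Real.smoothTransition (s / L) : ℂ) *
      (((-(Real.sin (ang L t) * (π / 2 * (deriv Real.smoothTransition (t / L - 1) * (1 / L)))) : ℝ)
        : ℂ) * w (s, t) + (Real.cos (ang L t) : ℂ) * fderiv ℝ w (s, t) (0, 1)) := by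
  have h1 := dt_hasDeriv (cutv_contDiff L hw) s t
  have h2 := (((ang_deriv L t).cos.const_mul (Real.smoothTransition (s / L))).ofReal_comp).mul
    (dt_hasDeriv hw s t)
  have h3 := h1.unique h2
  rw [h3]
  simp only [Complex.ofReal_mul, Complex.ofReal_neg]
  ring

lemma cutv_ds (L : ℝ) {w : ℝ × ℝ → ℂ} (hw : ContDiff ℝ ∞ w) (s t : ℝ) :
    fderiv ℝ (cutv L w) (s, t) (1, 0) = (Real.cos (ang L t) : ℂ) *
      (((deriv Real.smoothTransition (s / L) * (1 / L) : ℝ) : ℂ) * w (s, t) +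
        (Real.smoothTransition (s / L) : ℂ) * fderiv ℝ w (s, t) (1, 0)) := by
  have h1 := ds_hasDeriv (cutv_contDiff L hw) s t
  have h0 : HasDerivAt (fun s : ℝ => s / L) (1 / L) s := (hasDerivAt_id s).div_const L
  have h2 := ((((st_deriv (s / L)).comp s h0).mul_const (Real.cos (ang L t))).ofReal_comp).mul
    (ds_hasDeriv hw s t)
  have h3 := h1.unique h2
  rw [h3]
  simp only [Complex.ofReal_mul, Function.comp]
  ring

lemma dens_zero (γ τ : ℝ) {w : ℝ × ℝ → ℂ} {p : ℝ × ℝ} (hp : p ∉ tsupport w) :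
    dens γ τ w p = 0 := by
  have h1 : w p = 0 := image_eq_zero_of_notMem_tsupport hp
  have h2 : fderiv ℝ w p = 0 := fderiv_of_notMem_tsupport ℝ hp
  simp [dens, h1, h2]

lemma dens_integrable (γ τ : ℝ) {w : ℝ × ℝ → ℂ} (hw : ContDiff ℝ ∞ w)
    (hc : HasCompactSupport w) : Integrable (dens γ τ w) := by
  apply Continuous.integrable_of_hasCompactSupport
  · have h0 := hw.continuous
    have h1 := (fderiv_contDiff hw (1, 0)).continuous
    have h2 := (fderiv_contDiff hw (0, 1)).continuous
    unfold dens
    fun_prop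
  · exact HasCompactSupport.intro' hc.isCompact (isClosed_tsupport w) fun p hp => dens_zero γ τ hp

lemma D_hp (α : ℝ) (f : ℝ × ℝ → ℝ) (hf : ∀ p : ℝ × ℝ, 0 ≤ p.2 → p ∉ Dsec α → f p = 0) :
    ∫ p in Dsec α, f p = ∫ p, f p ∂hpm := by
  rw [hpm_eq]
  symm
  apply setIntegral_eq_of_subset_of_forall_sdiff_eq_zero
  · exact (isClosed_le continuous_const continuous_snd).measurableSet
  · intro p hp; exact hp.1
  · intro p hp; exact hf p hp.1 hp.2

lemma lower (α γ τ : ℝ) (hα : α ∈ Set.Ioo 0 π) (hγ : γ ∈ Set.Ioc 0 (π / 2)) (ε : ℝ) (hε : 0 < ε) :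
    ∃ R > (0 : ℝ), ∀ w : ℝ × ℝ → ℂ, ContDiff ℝ ∞ w → HasCompactSupport w →
      (∀ p : ℝ × ℝ, w p ≠ 0 → R ^ 2 < p.1 ^ 2 + p.2 ^ 2) →
      (Ebot γ τ - ε) * ∫ p in Dsec α, ‖w p‖ ^ 2 ≤ ∫ p in Dsec α, dens γ τ w p := by
  obtain ⟨K, hK⟩ := st_deriv_bdd
  have hK0 : 0 ≤ K := (abs_nonneg _).trans (hK 0)
  have hsα : 0 < Real.sin α := Real.sin_pos_of_mem_Ioo hα
  have hsα1 := Real.sin_le_one α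
  have hsγ : 0 < Real.sin γ := Real.sin_pos_of_pos_of_lt_pi hγ.1 (by linarith [hγ.2, Real.pi_pos])
  have hE0 : 0 ≤ Ebot γ τ := by
    apply Real.iInf_nonneg
    intro ξ
    have := deGennes_nonneg (ξ * Real.cos γ + τ * Real.sin γ)
    positivity
  set E := Ebot γ τ with hE
  -- choose L
  obtain ⟨L, hL0, hL1, hL2⟩ : ∃ L : ℝ, 0 < L ∧ |τ| + E + 1 ≤ L * Real.sin γ ∧
      (π / 2 * (K * (1 / L))) ^ 2 ≤ ε := by
    have t1 : Tendsto (fun L : ℝ => L * Real.sin γ) atTop atTop :=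
      tendsto_id.atTop_mul_const hsγ
    have t2 : Tendsto (fun L : ℝ => (π / 2 * (K * (1 / L))) ^ 2) atTop (𝓝 0) := by
      have : Tendsto (fun L : ℝ => (1 / L)) atTop (𝓝 0) := by
        simpa using tendsto_inv_atTop_zero (𝕜 := ℝ)
      simpa using ((this.const_mul K).const_mul (π / 2)).pow 2
    exact ((eventually_gt_atTop 0).and ((t1.eventually_ge_atTop _).and
      (t2.eventually_le_const hε))).exists
  set κ := 3 / Real.sin α with hκ
  have hκs : κ * Real.sin α = 3 := by rw [hκ]; field_simp
  have hκ3 : 3 ≤ κ := by rw [hκ, le_div_iff₀ hsα]; linarith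
  refine ⟨(κ + 2) * L, by positivity, fun w hw hc hR => ?_⟩
  have hts : ∀ p ∈ tsupport w, ((κ + 2) * L) ^ 2 ≤ p.1 ^ 2 + p.2 ^ 2 := by
    intro p hp
    have hcl : IsClosed {p : ℝ × ℝ | ((κ + 2) * L) ^ 2 ≤ p.1 ^ 2 + p.2 ^ 2} :=
      isClosed_le continuous_const (by fun_prop)
    exact closure_minimal (fun p hp => (hR p hp).le) hcl hp
  -- geometry
  have hgeo : ∀ s t : ℝ, (s, t) ∈ tsupport w → 0 ≤ t → t < 2 * L →
      κ * L ≤ s ∨ s ≤ -(κ * L) := by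
    intro s t hp h0 h2
    have := hts _ hp
    simp only at this
    have h4 : (κ * L) ^ 2 ≤ s ^ 2 := by
      have : t ^ 2 ≤ (2 * L) ^ 2 := by gcongr
      have : 0 ≤ κ * L * L := by positivity
      nlinarith
    have h5 := sq_le_sq.1 h4
    rw [abs_of_pos (by positivity : 0 < κ * L)] at h5
    rcases le_abs'.1 h5 with h | h
    · right; exact h
    · left; exact h
  have hcosα := abs_le.1 (Real.abs_cos_le_one α)
  -- far away in the normal direction
  have hfar : ∀ s t : ℝ, 2 * L ≤ t → dens γ τ (cutv L w) (s, t) = 0 ∧ cutv L w (s, t) = 0 ∧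
      Real.cos (ang L t) = 0 := by
    intro s t ht
    have h1 : 1 ≤ t / L - 1 := by
      have : 2 ≤ t / L := by rw [le_div_iff₀ hL0]; exact ht
      linarith
    have h2 : Real.cos (ang L t) = 0 := by
      rw [ang, Real.smoothTransition.one_of_one_le h1, mul_one, Real.cos_pi_div_two]
    have h3 : cutv L w (s, t) = 0 := by simp [cutv, h2]
    refine ⟨?_, h3, h2⟩
    simp [dens, h3, cutv_dt L hw, cutv_ds L hw, h2, st_deriv_one h1]
  -- outside of D
  have hout : ∀ p : ℝ × ℝ, 0 ≤ p.2 → p ∉ Dsec α →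
      dens γ τ (cutv L w) p = 0 ∧ cutv L w p = 0 := by
    rintro ⟨s, t⟩ h0 hD
    simp only at h0
    by_cases hp : (s, t) ∈ tsupport w
    · rcases le_or_gt (2 * L) t with ht | ht
      · exact ⟨(hfar s t ht).1, (hfar s t ht).2.1⟩
      · have hs : s / L ≤ 0 := by
          rcases hgeo s t hp h0 ht with h | h
          · exfalso
            apply hD
            refine ⟨h0, ?_⟩
            simp only
            nlinarith
          · apply div_nonpos_of_nonpos_of_nonneg _ hL0.le
            have : 0 < κ * L := by positivity
            linarith
        have h2 := Real.smoothTransition.zero_of_nonpos hs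
        have h3 : cutv L w (s, t) = 0 := by simp [cutv, h2]
        refine ⟨?_, h3⟩
        simp [dens, h3, cutv_dt L hw, cutv_ds L hw, h2, st_deriv_zero hs]
    · have h1 : w (s, t) = 0 := image_eq_zero_of_notMem_tsupport hp
      have h2 : fderiv ℝ w (s, t) = 0 := fderiv_of_notMem_tsupport ℝ hp
      have h3 : cutv L w (s, t) = 0 := by simp [cutv, h1]
      refine ⟨?_, h3⟩
      simp [dens, h3, cutv_dt L hw, cutv_ds L hw, h1, h2]
  -- inside of D
  have hVE : ∀ t : ℝ, E * Real.sin (ang L t) ^ 2 ≤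
      (t * Real.sin γ - τ) ^ 2 * Real.sin (ang L t) ^ 2 := by
    intro t
    rcases le_or_gt t L with ht | ht
    · have h1 : t / L - 1 ≤ 0 := by
        have : t / L ≤ 1 := by rw [div_le_one hL0]; exact ht
        linarith
      have : Real.sin (ang L t) = 0 := by
        rw [ang, Real.smoothTransition.zero_of_nonpos h1, mul_zero, Real.sin_zero]
      simp [this]
    · apply mul_le_mul_of_nonneg_right _ (sq_nonneg _)
      have h1 : L * Real.sin γ ≤ t * Real.sin γ := by gcongr
      have h2 : E + 1 ≤ t * Real.sin γ - τ := by linarith [le_abs_self τ]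
      nlinarith
  have hin : ∀ p ∈ Dsec α, dens γ τ (cutv L w) p + E * ‖w p‖ ^ 2 ≤
      dens γ τ w p + ε * ‖w p‖ ^ 2 + E * ‖cutv L w p‖ ^ 2 := by
    rintro ⟨s, t⟩ hD
    have h0 : 0 ≤ t := hD.1
    have hD2 : 0 ≤ s * Real.sin α - t * Real.cos α := hD.2
    have hsc := Real.sin_sq_add_cos_sq (ang L t)
    have hV := mul_le_mul_of_nonneg_right (hVE t) (sq_nonneg ‖w (s, t)‖)
    have hεw : 0 ≤ ε * ‖w (s, t)‖ ^ 2 := by positivity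
    rcases le_or_gt (2 * L) t with ht | ht
    · obtain ⟨h1, h2, h3⟩ := hfar s t ht
      rw [h1, h2, norm_zero]
      rw [h3] at hsc
      have : Real.sin (ang L t) ^ 2 = 1 := by linarith
      rw [this] at hV
      have e : dens γ τ w (s, t) = ‖(-Complex.I) * fderiv ℝ w (s, t) (1, 0)
        - ((Real.cos γ * t : ℝ) : ℂ) * w (s, t)‖ ^ 2 + ‖fderiv ℝ w (s, t) (0, 1)‖ ^ 2
        + (t * Real.sin γ - τ) ^ 2 * ‖w (s, t)‖ ^ 2 := rfl
      have p1 := sq_nonneg ‖(-Complex.I) * fderiv ℝ w (s, t) (1, 0)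
        - ((Real.cos γ * t : ℝ) : ℂ) * w (s, t)‖
      have p2 := sq_nonneg ‖fderiv ℝ w (s, t) (0, 1)‖
      rw [e]
      linarith
    by_cases hp : (s, t) ∈ tsupport w
    · have hs : 1 ≤ s / L := by
        rw [le_div_iff₀ hL0]
        rcases hgeo s t hp h0 ht with h | h
        · nlinarith
        · exfalso
          nlinarith
      have g1 := Real.smoothTransition.one_of_one_le hs
      have g2 := st_deriv_one hs
      have ecut : cutv L w (s, t) = (Real.cos (ang L t) : ℂ) * w (s, t) := by
        simp [cutv, g1]
      have encut : ‖cutv L w (s, t)‖ ^ 2 = Real.cos (ang L t) ^ 2 * ‖w (s, t)‖ ^ 2 := by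
        rw [ecut, norm_mul, mul_pow, Complex.norm_real, Real.norm_eq_abs, sq_abs]
      set X := (-Complex.I) * fderiv ℝ w (s, t) (1, 0)
        - ((Real.cos γ * t : ℝ) : ℂ) * w (s, t) with hX
      have e : dens γ τ w (s, t) = ‖X‖ ^ 2 + ‖fderiv ℝ w (s, t) (0, 1)‖ ^ 2
        + (t * Real.sin γ - τ) ^ 2 * ‖w (s, t)‖ ^ 2 := rfl
      have eX : (-Complex.I) * fderiv ℝ (cutv L w) (s, t) (1, 0)
        - ((Real.cos γ * t : ℝ) : ℂ) * cutv L w (s, t) = (Real.cos (ang L t) : ℂ) * X := by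
        rw [cutv_ds L hw, g1, g2, ecut, hX]
        simp
        ring
      have enX : ‖(-Complex.I) * fderiv ℝ (cutv L w) (s, t) (1, 0)
        - ((Real.cos γ * t : ℝ) : ℂ) * cutv L w (s, t)‖ ^ 2 =
          Real.cos (ang L t) ^ 2 * ‖X‖ ^ 2 := by
        rw [eX, norm_mul, mul_pow, Complex.norm_real, Real.norm_eq_abs, sq_abs]
      have e' : dens γ τ (cutv L w) (s, t) = ‖(-Complex.I) * fderiv ℝ (cutv L w) (s, t) (1, 0)
        - ((Real.cos γ * t : ℝ) : ℂ) * cutv L w (s, t)‖ ^ 2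
          + ‖fderiv ℝ (cutv L w) (s, t) (0, 1)‖ ^ 2
          + (t * Real.sin γ - τ) ^ 2 * ‖cutv L w (s, t)‖ ^ 2 := rfl
      rw [e', enX, encut, cutv_dt L hw, g1, e]
      set d := π / 2 * (deriv Real.smoothTransition (t / L - 1) * (1 / L)) with hd
      have hI := ims_alg (Real.cos (ang L t)) (Real.sin (ang L t)) d hsc (w (s, t))
        (fderiv ℝ w (s, t) (0, 1))
      have hd2 : d ^ 2 ≤ ε := by
        refine le_trans ?_ hL2
        apply sq_le_sq'
        · have := (abs_le.1 (hK (t / L - 1))).1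
          rw [hd, ← mul_neg, ← neg_mul]
          gcongr
        · have := (abs_le.1 (hK (t / L - 1))).2
          rw [hd]
          gcongr
      have hd3 := mul_le_mul_of_nonneg_right hd2 (sq_nonneg ‖w (s, t)‖)
      have hcX : Real.cos (ang L t) ^ 2 * ‖X‖ ^ 2 ≤ ‖X‖ ^ 2 := by
        have := Real.cos_sq_le_one (ang L t)
        nlinarith [sq_nonneg ‖X‖]
      rw [Complex.ofReal_one, one_mul]
      have hs2 : Real.sin (ang L t) ^ 2 = 1 - Real.cos (ang L t) ^ 2 := by linarith
      rw [hs2] at hV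
      linarith
    · have h1 : w (s, t) = 0 := image_eq_zero_of_notMem_tsupport hp
      have h2 : fderiv ℝ w (s, t) = 0 := fderiv_of_notMem_tsupport ℝ hp
      have h3 : cutv L w (s, t) = 0 := by simp [cutv, h1]
      have h4 : dens γ τ (cutv L w) (s, t) = 0 := by
        simp [dens, h3, cutv_dt L hw, cutv_ds L hw, h1, h2]
      have h5 : dens γ τ w (s, t) = 0 := by simp [dens, h1, h2]
      simp [h1, h3, h4, h5]
  -- integrate
  have hv := cutv_contDiff L hw
  have hvc := cutv_compact L hc
  have Id := (dens_integrable γ τ hw hc).restrict (s := Dsec α)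
  have Idv := (dens_integrable γ τ hv hvc).restrict (s := Dsec α)
  have Iw := (sq_integrable hw hc).restrict (s := Dsec α)
  have Iv := (sq_integrable hv hvc).restrict (s := Dsec α)
  have hIntegral := setIntegral_mono_on (Idv.add (Iw.const_mul E))
    ((Id.add (Iw.const_mul ε)).add (Iv.const_mul E)) (Dsec_meas α) hin
  have j1 : ∫ p in Dsec α, (dens γ τ (cutv L w) + fun p => E * ‖w p‖ ^ 2) p =
      (∫ p in Dsec α, dens γ τ (cutv L w) p) + E * ∫ p in Dsec α, ‖w p‖ ^ 2 := by
    rw [← integral_const_mul]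
    exact integral_add Idv (Iw.const_mul E)
  have j2 : ∫ p in Dsec α, ((dens γ τ w + fun p => ε * ‖w p‖ ^ 2) +
      fun p => E * ‖cutv L w p‖ ^ 2) p =
      (∫ p in Dsec α, dens γ τ w p) + ε * (∫ p in Dsec α, ‖w p‖ ^ 2)
        + E * ∫ p in Dsec α, ‖cutv L w p‖ ^ 2 := by
    rw [← integral_const_mul, ← integral_const_mul, ← integral_add Id (Iw.const_mul ε)]
    exact integral_add (Id.add (Iw.const_mul ε)) (Iv.const_mul E)
  rw [j1, j2, D_hp α _ (fun p h0 hp => (hout p h0 hp).1),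
    D_hp α (fun p => ‖cutv L w p‖ ^ 2) (fun p h0 hp => by simp [(hout p h0 hp).2])] at hIntegral
  have hh := halfplane γ τ hv hvc
  linarith

end MagWedge

namespace MagWedge

open scoped FourierTransform ContDiff Topology

lemma deGennes_approx (ξ ε : ℝ) (hε : 0 < ε) : ∃ u : ℝ → ℂ, ContDiff ℝ ∞ u ∧
    HasCompactSupport u ∧ (0 < ∫ t in Ioi (0 : ℝ), ‖u t‖ ^ 2) ∧
    (∫ t in Ioi (0 : ℝ), ‖deriv u t‖ ^ 2 + (t - ξ) ^ 2 * ‖u t‖ ^ 2) <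
      (deGennes ξ + ε) * (∫ t in Ioi (0 : ℝ), ‖u t‖ ^ 2) := by
  have hne : Set.Nonempty { r : ℝ | ∃ u : ℝ → ℂ, ContDiff ℝ (⊤ : ℕ∞) u ∧ HasCompactSupport u ∧
    (0 < ∫ t in Ioi (0 : ℝ), ‖u t‖ ^ 2) ∧
    r = (∫ t in Ioi (0 : ℝ), ‖deriv u t‖ ^ 2 + (t - ξ) ^ 2 * ‖u t‖ ^ 2) /
        (∫ t in Ioi (0 : ℝ), ‖u t‖ ^ 2) } := by
    let f : ContDiffBump (0 : ℝ) := ⟨1, 2, by norm_num, by norm_num⟩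
    have h1 : ContDiff ℝ ∞ (fun t => (f t : ℂ)) := ofReal_contDiff f.contDiff
    have h2 : HasCompactSupport (fun t => (f t : ℂ)) :=
      f.hasCompactSupport.comp_left (g := fun x : ℝ => (x : ℂ)) (by simp)
    refine ⟨_, fun t => (f t : ℂ), h1, h2, ?_, rfl⟩
    have hi : IntegrableOn (fun t => ‖(f t : ℂ)‖ ^ 2) (Ioi 0) :=
      ((h1.continuous.norm.pow 2).integrable_of_hasCompactSupport (sq_compact h2)).integrableOn
    have : ∫ t in Ioo (0 : ℝ) 1, ‖(f t : ℂ)‖ ^ 2 ≤ ∫ t in Ioi (0 : ℝ), ‖(f t : ℂ)‖ ^ 2 :=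
      setIntegral_mono_set hi (Eventually.of_forall fun t => by positivity)
        (Ioo_subset_Ioi_self).eventuallyLE
    refine lt_of_lt_of_le ?_ this
    have : ∫ t in Ioo (0 : ℝ) 1, ‖(f t : ℂ)‖ ^ 2 = ∫ t in Ioo (0 : ℝ) 1, (1 : ℝ) := by
      apply setIntegral_congr_fun measurableSet_Ioo
      intro t ht
      have : f t = 1 := f.one_of_mem_closedBall (by
        simp only [Metric.mem_closedBall, dist_zero_right, Real.norm_eq_abs]
        rw [abs_of_pos ht.1]; exact ht.2.le)
      simp [this]
    rw [this]
    simp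
  obtain ⟨r, ⟨u, hu, hc, hp, rfl⟩, hr⟩ := exists_lt_of_csInf_lt hne
    (show sInf _ < deGennes ξ + ε from lt_add_of_pos_right _ hε)
  refine ⟨u, hu, hc, hp, ?_⟩
  rwa [div_lt_iff₀ hp] at hr

/-- Far away, slowly varying cut-off. -/
lemma exists_psi (ε S : ℝ) (hε : 0 < ε) : ∃ ψ : ℝ → ℝ, ContDiff ℝ ∞ ψ ∧ HasCompactSupport ψ ∧
    (∀ s, ψ s ≠ 0 → S ≤ s) ∧ 0 < (∫ s, ψ s ^ 2) ∧
    ∫ s, deriv ψ s ^ 2 < ε * ∫ s, ψ s ^ 2 := by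
  let f : ContDiffBump (0 : ℝ) := ⟨1, 2, by norm_num, by norm_num⟩
  have hf : ContDiff ℝ ∞ f := f.contDiff
  have hpos : 0 < ∫ s, f s ^ 2 := by
    have hc2 : HasCompactSupport (fun s => f s ^ 2) :=
      f.hasCompactSupport.comp_left (g := fun x : ℝ => x ^ 2) (by simp)
    apply (f.continuous.pow 2).integral_pos_of_hasCompactSupport_nonneg_nonzero hc2
      (x := 0) (fun s => sq_nonneg (f s))
    have : f 0 = 1 := f.one_of_mem_closedBall (by simp [f])
    simp [this]
  set P := ∫ s, f s ^ 2 with hP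
  set Q := ∫ s, deriv f s ^ 2 with hQ
  have hQ0 : 0 ≤ Q := integral_nonneg fun s => by positivity
  obtain ⟨δ, hδ, hδ2⟩ : ∃ δ : ℝ, 0 < δ ∧ δ ^ 2 * Q < ε * P := by
    have t : Tendsto (fun δ : ℝ => δ ^ 2 * Q) (𝓝[>] 0) (𝓝 0) := by
      have : Continuous (fun δ : ℝ => δ ^ 2 * Q) := by fun_prop
      have := this.tendsto 0
      simp only [ne_eq, OfNat.ofNat_ne_zero, not_false_eq_true, zero_pow, zero_mul] at this
      exact this.mono_left nhdsWithin_le_nhds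
    have h2 : 0 < ε * P := by positivity
    exact (eventually_mem_nhdsWithin.and (t.eventually_lt_const h2)).exists
  set N := 2 + δ * S with hN
  have hd : ∀ s, HasDerivAt (fun s => f (δ * s - N)) (deriv f (δ * s - N) * δ) s := by
    intro s
    have h1 : HasDerivAt (fun s : ℝ => δ * s - N) δ s := by
      simpa using ((hasDerivAt_id s).const_mul δ).sub_const N
    exact ((hf.differentiable (by simp) _).hasDerivAt).comp s h1
  have scale : ∀ g : ℝ → ℝ, ∫ s, g (δ * s - N) = δ⁻¹ * ∫ s, g s := by
    intro g
    have := Measure.integral_comp_mul_left (fun s => g (s - N)) δ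
    rw [integral_sub_right_eq_self g N, abs_of_pos (inv_pos.2 hδ)] at this
    simpa using this
  have hsupp : ∀ s, f (δ * s - N) ≠ 0 → |δ * s - N| < 2 := by
    intro s hs
    have : δ * s - N ∈ Function.support f := hs
    rw [f.support_eq] at this
    simpa [f] using this
  refine ⟨fun s => f (δ * s - N), ?_, ?_, ?_, ?_, ?_⟩
  · exact hf.comp (by fun_prop : ContDiff ℝ ∞ fun s : ℝ => δ * s - N)
  · apply HasCompactSupport.intro (isCompact_Icc (a := (N - 2) / δ) (b := (N + 2) / δ))
    intro s hs
    by_contra h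
    have := abs_lt.1 (hsupp s h)
    apply hs
    constructor
    · rw [div_le_iff₀ hδ]; linarith
    · rw [le_div_iff₀ hδ]; linarith
  · intro s h
    have := abs_lt.1 (hsupp s h)
    by_contra h'
    nlinarith
  · rw [scale (fun s => f s ^ 2)]
    positivity
  · rw [scale (fun s => f s ^ 2)]
    have : ∀ s, deriv (fun s => f (δ * s - N)) s ^ 2 = (fun y => δ ^ 2 * deriv f y ^ 2) (δ * s - N) := by
      intro s
      rw [(hd s).deriv]; ring
    simp only [this]
    rw [scale (fun y => δ ^ 2 * deriv f y ^ 2), integral_const_mul]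
    have : 0 < δ⁻¹ := inv_pos.2 hδ
    calc δ⁻¹ * (δ ^ 2 * Q) < δ⁻¹ * (ε * P) := by gcongr
      _ = _ := by ring

lemma rsq_compact {f : ℝ → ℝ} (hf : HasCompactSupport f) :
    HasCompactSupport (fun s => f s ^ 2) := by
  have : HasCompactSupport (fun s => f s ^ 2) :=
    hf.comp_left (g := fun x : ℝ => x ^ 2) (by simp)
  exact this

set_option maxHeartbeats 2000000 in
lemma upper (α γ τ : ℝ) (hα : α ∈ Set.Ioo 0 π) (R ε : ℝ) (hR : 0 < R) (hε : 0 < ε) :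
    ∃ w : ℝ × ℝ → ℂ, ∃ S > R, ContDiff ℝ ∞ w ∧ HasCompactSupport w ∧
      (∀ p : ℝ × ℝ, w p ≠ 0 → S ≤ p.1) ∧ (0 < ∫ p in Dsec α, ‖w p‖ ^ 2) ∧
      ∫ p in Dsec α, dens γ τ w p ≤ (Ebot γ τ + ε) * ∫ p in Dsec α, ‖w p‖ ^ 2 := by
  have hsα : 0 < Real.sin α := Real.sin_pos_of_mem_Ioo hα
  obtain ⟨ξ, hξ⟩ := exists_lt_of_ciInf_lt
    (show (⨅ ξ : ℝ, (deGennes (ξ * Real.cos γ + τ * Real.sin γ)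
          + (ξ * Real.sin γ - τ * Real.cos γ) ^ 2)) < Ebot γ τ + ε / 3 from
      lt_add_of_pos_right _ (by positivity))
  set ξ' := ξ * Real.cos γ + τ * Real.sin γ with hξ'
  set d := ξ * Real.sin γ - τ * Real.cos γ with hd
  obtain ⟨φ, hφ, hφc, hφ0, hφq⟩ := deGennes_approx ξ' (ε / 3) (by positivity)
  obtain ⟨M, hM⟩ := hφc.isCompact.isBounded.exists_norm_le
  have hM' : ∀ t, φ t ≠ 0 → |t| ≤ |M| := fun t ht =>
    (hM t (subset_tsupport _ ht)).trans (le_abs_self M)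
  obtain ⟨ψ, hψ, hψc, hψs, hψ0, hψq⟩ := exists_psi (ε / 3) (R + 1 + |M| / Real.sin α)
    (by positivity)
  set S := R + 1 + |M| / Real.sin α with hS
  have hMs : 0 ≤ |M| / Real.sin α := by positivity
  have hSM : |M| ≤ S * Real.sin α := by
    have : |M| / Real.sin α ≤ S := by linarith
    rwa [div_le_iff₀ hsα] at this
  set e : ℝ → ℂ := fun s => Complex.exp (((ξ * s : ℝ) : ℂ) * Complex.I) with he
  have hen : ∀ s, ‖e s‖ = 1 := fun s => Complex.norm_exp_ofReal_mul_I _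
  have hes : ContDiff ℝ ∞ e :=
    ((ofReal_contDiff (by fun_prop : ContDiff ℝ ∞ fun s : ℝ => ξ * s)).mul contDiff_const).cexp
  have hed : ∀ s, HasDerivAt e (e s * ((ξ : ℂ) * Complex.I)) s := by
    intro s
    have h1 : HasDerivAt (fun s : ℝ => ξ * s) ξ s := by
      simpa using (hasDerivAt_id s).const_mul ξ
    exact (h1.ofReal_comp.mul_const Complex.I).cexp
  set w : ℝ × ℝ → ℂ := fun p => (ψ p.1 : ℂ) * e p.1 * φ p.2 with hw
  have hws : ContDiff ℝ ∞ w :=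
    ((ofReal_contDiff (hψ.comp contDiff_fst)).mul (hes.comp contDiff_fst)).mul
      (hφ.comp contDiff_snd)
  have hwc : HasCompactSupport w := by
    apply HasCompactSupport.intro (hψc.isCompact.prod hφc.isCompact)
    rintro ⟨s, t⟩ hp
    by_contra h
    apply hp
    refine ⟨subset_tsupport _ ?_, subset_tsupport _ ?_⟩
    · intro h0; apply h; simp [hw, h0]
    · intro h0; apply h; simp [hw, h0]
  have hwn : ∀ s t, ‖w (s, t)‖ ^ 2 = ψ s ^ 2 * ‖φ t‖ ^ 2 := by
    intro s t
    simp only [hw]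
    rw [norm_mul, norm_mul, hen, mul_one, mul_pow, Complex.norm_real, Real.norm_eq_abs, sq_abs]
  have hws1 : ∀ s t, fderiv ℝ w (s, t) (1, 0) =
      (((deriv ψ s : ℝ) : ℂ) + (ψ s : ℂ) * ξ * Complex.I) * (e s * φ t) := by
    intro s t
    have h1 := ds_hasDeriv hws s t
    have h2 := ((((hψ.differentiable (by simp) s).hasDerivAt).ofReal_comp).mul (hed s)).mul_const (φ t)
    have h3 := h1.unique h2
    rw [h3]; ring
  have hws2 : ∀ s t, fderiv ℝ w (s, t) (0, 1) = (ψ s : ℂ) * e s * deriv φ t := by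
    intro s t
    have h1 := dt_hasDeriv hws s t
    have h2 := ((hφ.differentiable (by simp) t).hasDerivAt).const_mul ((ψ s : ℂ) * e s)
    exact h1.unique h2
  set h : ℝ → ℝ := fun t => (‖deriv φ t‖ ^ 2 + (t - ξ') ^ 2 * ‖φ t‖ ^ 2) + d ^ 2 * ‖φ t‖ ^ 2 with hh
  have hdens : ∀ s t, dens γ τ w (s, t) = ψ s ^ 2 * h t + deriv ψ s ^ 2 * ‖φ t‖ ^ 2 := by
    intro s t
    have e1 : (-Complex.I) * fderiv ℝ w (s, t) (1, 0) - ((Real.cos γ * t : ℝ) : ℂ) * w (s, t) =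
        (((ψ s * (ξ - Real.cos γ * t) : ℝ) : ℂ) + ((-deriv ψ s : ℝ) : ℂ) * Complex.I) *
          (e s * φ t) := by
      rw [hws1]
      simp only [hw, Complex.ofReal_mul, Complex.ofReal_sub, Complex.ofReal_neg]
      linear_combination (-(ψ s : ℂ) * ξ * (e s * φ t)) * Complex.I_mul_I
    have e2 : ‖(-Complex.I) * fderiv ℝ w (s, t) (1, 0)
        - ((Real.cos γ * t : ℝ) : ℂ) * w (s, t)‖ ^ 2 =
        (ψ s ^ 2 * (ξ - Real.cos γ * t) ^ 2 + deriv ψ s ^ 2) * ‖φ t‖ ^ 2 := by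
      rw [e1, norm_mul, norm_mul, hen, one_mul, mul_pow, ← Complex.normSq_eq_norm_sq,
        Complex.normSq_add_mul_I]
      ring
    have e3 : ‖fderiv ℝ w (s, t) (0, 1)‖ ^ 2 = ψ s ^ 2 * ‖deriv φ t‖ ^ 2 := by
      rw [hws2, norm_mul, norm_mul, hen, mul_one, mul_pow, Complex.norm_real, Real.norm_eq_abs,
        sq_abs]
    have e4 : dens γ τ w (s, t) = ‖(-Complex.I) * fderiv ℝ w (s, t) (1, 0)
        - ((Real.cos γ * t : ℝ) : ℂ) * w (s, t)‖ ^ 2 + ‖fderiv ℝ w (s, t) (0, 1)‖ ^ 2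
        + (t * Real.sin γ - τ) ^ 2 * ‖w (s, t)‖ ^ 2 := rfl
    rw [e4, e2, e3, hwn]
    have hcs := Real.sin_sq_add_cos_sq γ
    simp only [hh, hξ', hd]
    linear_combination (t ^ 2 - ξ ^ 2 - τ ^ 2) * ψ s ^ 2 * ‖φ t‖ ^ 2 * hcs
  have hDs : ∀ p : ℝ × ℝ, 0 ≤ p.2 → p ∉ Dsec α → p ∉ tsupport w := by
    rintro ⟨s, t⟩ h0 hD hp
    have hcl : IsClosed {p : ℝ × ℝ | S ≤ p.1 ∧ |p.2| ≤ |M|} :=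
      (isClosed_le continuous_const continuous_fst).inter
        (isClosed_le (continuous_abs.comp continuous_snd) continuous_const)
    have hmem : (s, t) ∈ {p : ℝ × ℝ | S ≤ p.1 ∧ |p.2| ≤ |M|} := by
      refine closure_minimal ?_ hcl hp
      rintro ⟨s, t⟩ hne
      have hne' : (ψ s : ℂ) * e s * φ t ≠ 0 := hne
      refine ⟨hψs s ?_, hM' t (right_ne_zero_of_mul hne')⟩
      intro h0; apply hne'; simp [h0]
    obtain ⟨m1, m2⟩ := hmem
    simp only at m1 m2 h0
    apply hD
    refine ⟨h0, ?_⟩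
    simp only
    have hcosα := abs_le.1 (Real.abs_cos_le_one α)
    have h1 := (abs_le.1 m2).2
    have h2 : S * Real.sin α ≤ s * Real.sin α := by gcongr
    nlinarith
  have In : ∫ p in Dsec α, ‖w p‖ ^ 2 = (∫ s, ψ s ^ 2) * ∫ t in Ioi (0 : ℝ), ‖φ t‖ ^ 2 := by
    rw [D_hp α (fun p => ‖w p‖ ^ 2) (fun p h0 hp => by
      simp [image_eq_zero_of_notMem_tsupport (hDs p h0 hp)]), hpm, ← integral_prod_mul]
    congr 1; ext ⟨s, t⟩; exact hwn s t
  have iφ : Integrable (fun t => ‖φ t‖ ^ 2) (volume.restrict (Ioi 0)) :=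
    ((hφ.continuous.norm.pow 2).integrable_of_hasCompactSupport (sq_compact hφc)).restrict
  have iφ2 : Integrable (fun t => ‖deriv φ t‖ ^ 2 + (t - ξ') ^ 2 * ‖φ t‖ ^ 2)
      (volume.restrict (Ioi 0)) := by
    have hdc : Continuous (deriv φ) := hφ.continuous_deriv (by simp)
    apply Integrable.restrict
    apply Integrable.add
    · exact ((hdc.norm.pow 2).integrable_of_hasCompactSupport (sq_compact hφc.deriv))
    · apply Continuous.integrable_of_hasCompactSupport
      · have := hφ.continuous
        fun_prop
      · exact (sq_compact hφc).mul_left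
  have ih : Integrable h (volume.restrict (Ioi 0)) := iφ2.add (iφ.const_mul _)
  have iψ : Integrable (fun s => ψ s ^ 2) :=
    (hψ.continuous.pow 2).integrable_of_hasCompactSupport (rsq_compact hψc)
  have iψ' : Integrable (fun s => deriv ψ s ^ 2) :=
    ((hψ.continuous_deriv (by simp)).pow 2).integrable_of_hasCompactSupport
      (rsq_compact hψc.deriv)
  have Ie : ∫ p in Dsec α, dens γ τ w p = (∫ s, ψ s ^ 2) * (∫ t in Ioi (0 : ℝ), h t) +
      (∫ s, deriv ψ s ^ 2) * ∫ t in Ioi (0 : ℝ), ‖φ t‖ ^ 2 := by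
    rw [D_hp α _ (fun p h0 hp => dens_zero γ τ (hDs p h0 hp)), hpm, ← integral_prod_mul,
      ← integral_prod_mul, ← integral_add (iψ.mul_prod ih) (iψ'.mul_prod iφ)]
    congr 1; ext ⟨s, t⟩; exact hdens s t
  have Ih : ∫ t in Ioi (0 : ℝ), h t =
      (∫ t in Ioi (0 : ℝ), ‖deriv φ t‖ ^ 2 + (t - ξ') ^ 2 * ‖φ t‖ ^ 2) +
        d ^ 2 * ∫ t in Ioi (0 : ℝ), ‖φ t‖ ^ 2 := by
    rw [← integral_const_mul]
    exact integral_add iφ2 (iφ.const_mul _)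
  refine ⟨w, S, by linarith, hws, hwc, ?_, ?_, ?_⟩
  · rintro ⟨s, t⟩ hne
    have hne' : (ψ s : ℂ) * e s * φ t ≠ 0 := hne
    apply hψs s
    intro h0; apply hne'; simp [h0]
  · rw [In]; positivity
  · rw [In, Ie, Ih]
    set A := ∫ s, ψ s ^ 2
    set B := ∫ s, deriv ψ s ^ 2
    set F := ∫ t in Ioi (0 : ℝ), ‖φ t‖ ^ 2
    set G := ∫ t in Ioi (0 : ℝ), ‖deriv φ t‖ ^ 2 + (t - ξ') ^ 2 * ‖φ t‖ ^ 2
    have k1 : A * G ≤ A * ((deGennes ξ' + ε / 3) * F) := by gcongr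
    have k2 : B * F ≤ (ε / 3 * A) * F := by gcongr
    have k3 : (deGennes ξ' + d ^ 2) * (A * F) ≤ (Ebot γ τ + ε / 3) * (A * F) := by gcongr
    nlinarith

end MagWedge

open MagWedge in
/-- the bottom of the essential spectrum on the sector. -/
theorem sEss_eq (α γ τ : ℝ) (hα : α ∈ Set.Ioo 0 π) (hγ : γ ∈ Set.Ioc 0 (π / 2)) :
    sEss α (Real.sin γ * Real.cos (α / 2)) (Real.sin γ * Real.sin (α / 2)) (Real.cos γ) τ
      = ⨅ ξ : ℝ, (deGennes (ξ * Real.cos γ + τ * Real.sin γ)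
          + (ξ * Real.sin γ - τ * Real.cos γ) ^ 2) := by
  change _ = Ebot γ τ
  have hnn : ∀ u : ℝ × ℝ → ℂ, 0 ≤ energy2D (sector α) (Real.sin γ * Real.cos (α / 2))
      (Real.sin γ * Real.sin (α / 2)) (Real.cos γ) τ u := fun u =>
    integral_nonneg fun x => by positivity
  -- admissible functions with small energy
  have hup : ∀ R > (0 : ℝ), ∀ ε > (0 : ℝ), ∃ u : ℝ × ℝ → ℂ, ContDiff ℝ (⊤ : ℕ∞) u ∧
      HasCompactSupport u ∧ (tsupport u ⊆ {x : ℝ × ℝ | R ^ 2 < x.1 ^ 2 + x.2 ^ 2}) ∧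
      0 < norm2D (sector α) u ∧
      energy2D (sector α) (Real.sin γ * Real.cos (α / 2)) (Real.sin γ * Real.sin (α / 2))
        (Real.cos γ) τ u / norm2D (sector α) u ≤ Ebot γ τ + ε := by
    intro R hR ε hε
    obtain ⟨w, S, hS, hw, hc, hs, hn, hq⟩ := upper α γ τ hα R ε hR hε
    refine ⟨twist (α / 2) (Real.cos γ) w, twist_contDiff _ _ hw, twist_compact _ _ hc, ?_, ?_, ?_⟩
    · intro x hx
      have hcl : IsClosed {x : ℝ × ℝ | S ≤ (rho (α / 2) x).1} :=
        isClosed_le continuous_const (continuous_fst.comp (rho (α / 2)).continuous)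
      have hmem : x ∈ {x : ℝ × ℝ | S ≤ (rho (α / 2) x).1} := by
        refine closure_minimal ?_ hcl hx
        intro y hy
        have hy' : twist (α / 2) (Real.cos γ) w y ≠ 0 := hy
        exact hs _ (right_ne_zero_of_mul hy')
      have hmem' : S ≤ Real.cos (α / 2) * x.1 + Real.sin (α / 2) * x.2 := hmem
      change R ^ 2 < x.1 ^ 2 + x.2 ^ 2
      have h := Real.sin_sq_add_cos_sq (α / 2)
      have e : (Real.cos (α / 2) * x.1 + Real.sin (α / 2) * x.2) ^ 2 +
          (Real.sin (α / 2) * x.1 - Real.cos (α / 2) * x.2) ^ 2 = x.1 ^ 2 + x.2 ^ 2 := by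
        linear_combination (x.1 ^ 2 + x.2 ^ 2) * h
      have h1 : R ^ 2 < (Real.cos (α / 2) * x.1 + Real.sin (α / 2) * x.2) ^ 2 := by
        gcongr
        linarith
      have h2 := sq_nonneg (Real.sin (α / 2) * x.1 - Real.cos (α / 2) * x.2)
      linarith
    · rw [twist_norm2D α _ hα]; exact hn
    · rw [twist_norm2D α _ hα, twist_energy α γ τ hα hw, div_le_iff₀ hn]
      exact hq
  have hSle : ∀ R > (0 : ℝ), SigmaR α (Real.sin γ * Real.cos (α / 2))
      (Real.sin γ * Real.sin (α / 2)) (Real.cos γ) τ R ≤ Ebot γ τ := by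
    intro R hR
    apply le_of_forall_pos_le_add
    intro ε hε
    obtain ⟨u, h1, h2, h3, h4, h5⟩ := hup R hR ε hε
    refine le_trans (csInf_le ?_ ?_) h5
    · refine ⟨0, ?_⟩
      rintro r ⟨v, -, -, -, hv, rfl⟩
      exact div_nonneg (hnn v) hv.le
    · exact ⟨u, h1, h2, h3, h4, rfl⟩
  apply le_antisymm
  · apply csSup_le
    · exact ⟨_, 1, one_pos, rfl⟩
    · rintro r ⟨R, hR, rfl⟩
      exact hSle R hR
  · apply le_of_forall_pos_le_add
    intro ε hε
    obtain ⟨R, hR, hlow⟩ := lower α γ τ hα hγ ε hε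
    have h1 : Ebot γ τ - ε ≤ SigmaR α (Real.sin γ * Real.cos (α / 2))
        (Real.sin γ * Real.sin (α / 2)) (Real.cos γ) τ R := by
      apply le_csInf
      · obtain ⟨u, h1, h2, h3, h4, h5⟩ := hup R hR 1 one_pos
        exact ⟨_, u, h1, h2, h3, h4, rfl⟩
      · rintro r ⟨u, hu, hc, hs, hn, rfl⟩
        have hl := hlow (untwist (α / 2) (Real.cos γ) u) (untwist_contDiff _ _ hu)
          (untwist_compact _ _ hc) (untwist_ne _ _ hs)
        rw [← twist_norm2D α (Real.cos γ) hα,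
          ← twist_energy α γ τ hα (untwist_contDiff _ _ hu), twist_untwist] at hl
        rwa [le_div_iff₀ hn]
    have h2 : SigmaR α (Real.sin γ * Real.cos (α / 2))
        (Real.sin γ * Real.sin (α / 2)) (Real.cos γ) τ R ≤ sEss α (Real.sin γ * Real.cos (α / 2))
        (Real.sin γ * Real.sin (α / 2)) (Real.cos γ) τ := by
      apply le_csSup
      · refine ⟨Ebot γ τ, ?_⟩
        rintro r ⟨R, hR, rfl⟩
        exact hSle R hR
      · exact ⟨R, hR, rfl⟩
    linarith
end
end

section
/- Let α ∈ (0,π), γ ∈ [0,π/2], and B = (sin γ·cos(α/2), sin γ·sin(α/2), cos γ) (a unit magnetic field tangent to a face of the wedge W_α). Then λ(B;W_α) ≤ Θ₀. -/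
open Real MeasureTheory Set Filter

noncomputable section

namespace MagWedge

/-- phase -/
def phs (c s C S ξ : ℝ) (x : ℝ × ℝ × ℝ) : ℝ :=
  ξ * (C * (c * x.1 + s * x.2.1) - S * x.2.2)
    - C * (s * c * x.1 ^ 2 / 2 + s ^ 2 * (x.1 * x.2.1) - s * c * x.2.1 ^ 2 / 2)

/-- trial function -/
def trial (c s C S ξ : ℝ) (f : ℝ → ℂ) (k w : ℝ → ℝ) (x : ℝ × ℝ × ℝ) : ℂ :=
  Complex.exp (Complex.I * (phs c s C S ξ x : ℂ)) * (f (s * x.1 - c * x.2.1)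
    * ((k (c * x.1 + s * x.2.1) : ℂ) * (w x.2.2 : ℂ)))

lemma trial_contDiff (c s C S ξ : ℝ) (f : ℝ → ℂ) (k w : ℝ → ℝ)
    (hf : ContDiff ℝ (⊤ : ℕ∞) f) (hk : ContDiff ℝ (⊤ : ℕ∞) k) (hw : ContDiff ℝ (⊤ : ℕ∞) w) :
    ContDiff ℝ (⊤ : ℕ∞) (trial c s C S ξ f k w) := by
  have h0 : ContDiff ℝ (⊤ : ℕ∞) (phs c s C S ξ) := by
    unfold phs; fun_prop
  have ho : ContDiff ℝ (⊤ : ℕ∞) (fun x : ℝ => (x : ℂ)) := Complex.ofRealCLM.contDiff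
  have h1 : ContDiff ℝ (⊤ : ℕ∞) (fun x => ((phs c s C S ξ x : ℝ) : ℂ)) := ho.comp h0
  have h2 : ContDiff ℝ (⊤ : ℕ∞) (fun x : ℝ × ℝ × ℝ => f (s * x.1 - c * x.2.1)) :=
    hf.comp (by fun_prop)
  have h3 : ContDiff ℝ (⊤ : ℕ∞) (fun x : ℝ × ℝ × ℝ => ((k (c * x.1 + s * x.2.1) : ℝ) : ℂ)) :=
    ho.comp (hk.comp (by fun_prop))
  have h4 : ContDiff ℝ (⊤ : ℕ∞) (fun x : ℝ × ℝ × ℝ => ((w x.2.2 : ℝ) : ℂ)) :=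
    ho.comp (hw.comp (by fun_prop))
  unfold trial
  exact ((contDiff_const.mul h1).cexp).mul (h2.mul (h3.mul h4))

lemma trial_fderiv (c s C S ξ : ℝ) (f : ℝ → ℂ) (k w : ℝ → ℝ)
    (hf : ContDiff ℝ (⊤ : ℕ∞) f) (hk : ContDiff ℝ (⊤ : ℕ∞) k) (hw : ContDiff ℝ (⊤ : ℕ∞) w)
    (x : ℝ × ℝ × ℝ) (p q r : ℝ) :
    fderiv ℝ (trial c s C S ξ f k w) x (p, q, r) =
    Complex.exp (Complex.I * (phs c s C S ξ x : ℂ)) *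
      (Complex.I * ((ξ * (C * (c * p + s * q) - S * r)
        - C * (s * c * x.1 * p + s ^ 2 * (x.1 * q + x.2.1 * p) - s * c * x.2.1 * q) : ℝ) : ℂ)
        * (f (s * x.1 - c * x.2.1) * ((k (c * x.1 + s * x.2.1) : ℂ) * (w x.2.2 : ℂ)))
       + (deriv f (s * x.1 - c * x.2.1) * ((s * p - c * q : ℝ) : ℂ)
            * ((k (c * x.1 + s * x.2.1) : ℂ) * (w x.2.2 : ℂ))
          + f (s * x.1 - c * x.2.1) *
           (((deriv k (c * x.1 + s * x.2.1) * (c * p + s * q) : ℝ) : ℂ) * (w x.2.2 : ℂ)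
            + (k (c * x.1 + s * x.2.1) : ℂ) * ((deriv w x.2.2 * r : ℝ) : ℂ)))) := by
  have hd : DifferentiableAt ℝ (trial c s C S ξ f k w) x :=
    (trial_contDiff c s C S ξ f k w hf hk hw).differentiable (by simp) x
  rw [← hd.lineDeriv_eq_fderiv]
  apply HasLineDerivAt.lineDeriv
  unfold HasLineDerivAt
  have hx : ∀ h : ℝ, x + h • (p, q, r) = (x.1 + h * p, x.2.1 + h * q, x.2.2 + h * r) := by
    intro h; ext <;> simp
  simp only [hx, trial]
  have l1 : HasDerivAt (fun h : ℝ => x.1 + h * p) p 0 := by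
    simpa using ((hasDerivAt_id (0:ℝ)).mul_const p).const_add x.1
  have l2 : HasDerivAt (fun h : ℝ => x.2.1 + h * q) q 0 := by
    simpa using ((hasDerivAt_id (0:ℝ)).mul_const q).const_add x.2.1
  have l3 : HasDerivAt (fun h : ℝ => x.2.2 + h * r) r 0 := by
    simpa using ((hasDerivAt_id (0:ℝ)).mul_const r).const_add x.2.2
  have ls : HasDerivAt (fun h : ℝ => c * (x.1 + h * p) + s * (x.2.1 + h * q)) (c * p + s * q) 0 :=
    (l1.const_mul c).add (l2.const_mul s)
  have lt : HasDerivAt (fun h : ℝ => s * (x.1 + h * p) - c * (x.2.1 + h * q)) (s * p - c * q) 0 :=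
    (l1.const_mul s).sub (l2.const_mul c)
  have lp : HasDerivAt (fun h : ℝ => phs c s C S ξ (x.1 + h * p, x.2.1 + h * q, x.2.2 + h * r))
      (ξ * (C * (c * p + s * q) - S * r)
        - C * (s * c * x.1 * p + s ^ 2 * (x.1 * q + x.2.1 * p) - s * c * x.2.1 * q)) 0 := by
    unfold phs
    have := ((((ls.const_mul C).sub (l3.const_mul S)).const_mul ξ)).sub
      (((((l1.pow 2).const_mul (s * c)).div_const 2).add ((l1.mul l2).const_mul (s ^ 2))
       |>.sub (((l2.pow 2).const_mul (s * c)).div_const 2)).const_mul C)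
    refine this.congr_deriv ?_
    simp only [zero_mul, add_zero, Nat.cast_ofNat, Nat.reduceSub, pow_one]
    ring
  have df : HasDerivAt (fun h : ℝ => f (s * (x.1 + h * p) - c * (x.2.1 + h * q)))
      (deriv f (s * x.1 - c * x.2.1) * ((s * p - c * q : ℝ) : ℂ)) 0 := by
    have h1 : HasDerivAt f (deriv f (s * x.1 - c * x.2.1))
        (s * (x.1 + 0 * p) - c * (x.2.1 + 0 * q)) := by
      have := (hf.differentiable (by simp) (s * x.1 - c * x.2.1)).hasDerivAt
      simpa using this
    have := h1.scomp (0:ℝ) lt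
    refine this.congr_deriv ?_
    simp [mul_comm]
  have dk : HasDerivAt (fun h : ℝ => ((k (c * (x.1 + h * p) + s * (x.2.1 + h * q)) : ℝ) : ℂ))
      ((deriv k (c * x.1 + s * x.2.1) * (c * p + s * q) : ℝ) : ℂ) 0 := by
    have h1 : HasDerivAt k (deriv k (c * x.1 + s * x.2.1))
        (c * (x.1 + 0 * p) + s * (x.2.1 + 0 * q)) := by
      have := (hk.differentiable (by simp) (c * x.1 + s * x.2.1)).hasDerivAt
      simpa using this
    exact (h1.comp (0:ℝ) ls).ofReal_comp
  have dw : HasDerivAt (fun h : ℝ => ((w (x.2.2 + h * r) : ℝ) : ℂ))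
      ((deriv w x.2.2 * r : ℝ) : ℂ) 0 := by
    have h1 : HasDerivAt w (deriv w x.2.2) (x.2.2 + 0 * r) := by
      have := (hw.differentiable (by simp) x.2.2).hasDerivAt
      simpa using this
    exact (h1.comp (0:ℝ) l3).ofReal_comp
  have de := ((lp.ofReal_comp).const_mul Complex.I).cexp
  have := de.mul (df.mul (dk.mul dw))
  refine this.congr_deriv ?_
  simp only [zero_mul, add_zero, Prod.mk.eta, Pi.mul_apply]
  ring

lemma nsq (z : ℂ) : ‖z‖ ^ 2 = z.re ^ 2 + z.im ^ 2 := by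
  rw [← Complex.normSq_eq_norm_sq, Complex.normSq_apply]; ring

lemma trial_norm (c s C S ξ : ℝ) (f : ℝ → ℂ) (k w : ℝ → ℝ) (x : ℝ × ℝ × ℝ) :
    ‖trial c s C S ξ f k w x‖ ^ 2 =
      ‖f (s * x.1 - c * x.2.1)‖ ^ 2 * (k (c * x.1 + s * x.2.1) ^ 2 * w x.2.2 ^ 2) := by
  unfold trial
  have : ‖Complex.exp (Complex.I * (phs c s C S ξ x : ℂ))‖ = 1 := by
    rw [mul_comm]; exact Complex.norm_exp_ofReal_mul_I _
  rw [norm_mul, this, norm_mul, norm_mul, Complex.norm_real, Complex.norm_real]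
  simp [mul_pow]

lemma trial_density (c s C S ξ : ℝ) (h1 : c ^ 2 + s ^ 2 = 1) (h2 : C ^ 2 + S ^ 2 = 1)
    (f : ℝ → ℂ) (k w : ℝ → ℝ)
    (hf : ContDiff ℝ (⊤ : ℕ∞) f) (hk : ContDiff ℝ (⊤ : ℕ∞) k) (hw : ContDiff ℝ (⊤ : ℕ∞) w)
    (x : ℝ × ℝ × ℝ) :
    ‖(-Complex.I) * fderiv ℝ (trial c s C S ξ f k w) x (1, 0, 0)
        + ((x.2.1 * C : ℝ) : ℂ) * trial c s C S ξ f k w x‖ ^ 2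
      + ‖fderiv ℝ (trial c s C S ξ f k w) x (0, 1, 0)‖ ^ 2
      + ‖(-Complex.I) * fderiv ℝ (trial c s C S ξ f k w) x (0, 0, 1)
          - ((x.2.1 * (S * c) : ℝ) : ℂ) * trial c s C S ξ f k w x
          + ((x.1 * (S * s) : ℝ) : ℂ) * trial c s C S ξ f k w x‖ ^ 2
    = (‖deriv f (s * x.1 - c * x.2.1)‖ ^ 2
        + ((s * x.1 - c * x.2.1) - ξ) ^ 2 * ‖f (s * x.1 - c * x.2.1)‖ ^ 2)
        * (k (c * x.1 + s * x.2.1) ^ 2 * w x.2.2 ^ 2)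
      + ‖f (s * x.1 - c * x.2.1)‖ ^ 2 *
        (deriv k (c * x.1 + s * x.2.1) ^ 2 * w x.2.2 ^ 2)
      + ‖f (s * x.1 - c * x.2.1)‖ ^ 2 *
        (k (c * x.1 + s * x.2.1) ^ 2 * deriv w x.2.2 ^ 2) := by
  rw [trial_fderiv c s C S ξ f k w hf hk hw, trial_fderiv c s C S ξ f k w hf hk hw,
    trial_fderiv c s C S ξ f k w hf hk hw]
  unfold trial
  obtain ⟨x1, x2, x3⟩ := x
  have hE : ‖Complex.exp (Complex.I * (phs c s C S ξ (x1, x2, x3) : ℂ))‖ = 1 := by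
    rw [mul_comm]; exact Complex.norm_exp_ofReal_mul_I _
  generalize Complex.exp (Complex.I * (phs c s C S ξ (x1, x2, x3) : ℂ)) = E at hE
  simp only
  set t := s * x1 - c * x2 with ht
  set σ := c * x1 + s * x2 with hs
  generalize f t = F
  generalize deriv f t = F'
  generalize k σ = K
  generalize deriv k σ = K'
  generalize w x3 = W
  generalize deriv w x3 = W'
  have e1 : (-Complex.I) * (E * (Complex.I * ((ξ * (C * (c * 1 + s * 0) - S * 0)
        - C * (s * c * x1 * 1 + s ^ 2 * (x1 * 0 + x2 * 1) - s * c * x2 * 0) : ℝ) : ℂ)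
        * (F * ((K : ℂ) * (W : ℂ)))
       + (F' * ((s * 1 - c * 0 : ℝ) : ℂ) * ((K : ℂ) * (W : ℂ))
          + F * (((K' * (c * 1 + s * 0) : ℝ) : ℂ) * (W : ℂ)
            + (K : ℂ) * ((W' * 0 : ℝ) : ℂ))))) + ((x2 * C : ℝ) : ℂ) * (E * (F * ((K : ℂ) * (W : ℂ))))
      = E * ((((ξ - t) * C * c * K * W : ℝ) : ℂ) * F - Complex.I * (((s * K * W : ℝ) : ℂ) * F' +
          ((K' * c * W : ℝ) : ℂ) * F)) := by
    have hc : (x2 : ℂ) * C = x2 * C * (c ^ 2 + s ^ 2) := by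
      have : (c : ℂ) ^ 2 + (s : ℂ) ^ 2 = 1 := by exact_mod_cast h1
      rw [this, mul_one]
    have hI := Complex.I_sq
    push_cast [ht]
    rw [hc]
    linear_combination (-E * F * K * W * (ξ * C * c - C * (s * c * x1 + s ^ 2 * x2))) * hI
  have e2 : (E * (Complex.I * ((ξ * (C * (c * 0 + s * 1) - S * 0)
        - C * (s * c * x1 * 0 + s ^ 2 * (x1 * 1 + x2 * 0) - s * c * x2 * 1) : ℝ) : ℂ)
        * (F * ((K : ℂ) * (W : ℂ)))
       + (F' * ((s * 0 - c * 1 : ℝ) : ℂ) * ((K : ℂ) * (W : ℂ))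
          + F * (((K' * (c * 0 + s * 1) : ℝ) : ℂ) * (W : ℂ)
            + (K : ℂ) * ((W' * 0 : ℝ) : ℂ)))))
      = E * (Complex.I * (((ξ - t) * C * s * K * W : ℝ) : ℂ) * F + (-((c * K * W : ℝ) : ℂ) * F' +
          ((K' * s * W : ℝ) : ℂ) * F)) := by
    push_cast [ht]
    ring
  have e3 : (-Complex.I) * (E * (Complex.I * ((ξ * (C * (c * 0 + s * 0) - S * 1)
        - C * (s * c * x1 * 0 + s ^ 2 * (x1 * 0 + x2 * 0) - s * c * x2 * 0) : ℝ) : ℂ)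
        * (F * ((K : ℂ) * (W : ℂ)))
       + (F' * ((s * 0 - c * 0 : ℝ) : ℂ) * ((K : ℂ) * (W : ℂ))
          + F * (((K' * (c * 0 + s * 0) : ℝ) : ℂ) * (W : ℂ)
            + (K : ℂ) * ((W' * 1 : ℝ) : ℂ)))))
        - ((x2 * (S * c) : ℝ) : ℂ) * (E * (F * ((K : ℂ) * (W : ℂ))))
        + ((x1 * (S * s) : ℝ) : ℂ) * (E * (F * ((K : ℂ) * (W : ℂ))))
      = E * (((-(ξ - t) * S * K * W : ℝ) : ℂ) * F - Complex.I * (((K * W' : ℝ) : ℂ) * F)) := by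
    have hI := Complex.I_sq
    push_cast [ht]
    linear_combination (E * F * K * W * ξ * S) * hI
  rw [e1, e2, e3, norm_mul, norm_mul, norm_mul, hE]
  simp only [one_mul, nsq]
  simp only [Complex.add_re, Complex.add_im, Complex.sub_re, Complex.sub_im, Complex.mul_re,
    Complex.mul_im, Complex.I_re, Complex.I_im, Complex.ofReal_re, Complex.ofReal_im,
    Complex.neg_re, Complex.neg_im]
  generalize F.re = a
  generalize F.im = b
  generalize F'.re = a'
  generalize F'.im = b'
  clear e1 e2 e3
  clear_value t
  have h3 : c ^ 2 = 1 - s ^ 2 := by linarith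
  have h4 : C ^ 2 = 1 - S ^ 2 := by linarith
  ring_nf
  simp only [h3, h4]
  ring

/-- rotation-reflection to adapted coordinates is measure preserving -/
lemma rot_mp (c s : ℝ) (h1 : c ^ 2 + s ^ 2 = 1) :
    MeasurePreserving (fun x : ℝ × ℝ × ℝ => (s * x.1 - c * x.2.1, (c * x.1 + s * x.2.1, x.2.2)))
      volume volume := by
  let L : (ℝ × ℝ × ℝ) →ₗ[ℝ] (ℝ × ℝ × ℝ) :=
    { toFun := fun x => (s * x.1 - c * x.2.1, (c * x.1 + s * x.2.1, x.2.2))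
      map_add' := by intro x y; ext <;> simp <;> ring
      map_smul' := by intro m x; ext <;> simp <;> ring }
  let e : (Fin 3 → ℝ) ≃ₗ[ℝ] (ℝ × ℝ × ℝ) :=
    { toFun := fun v => (v 0, v 1, v 2)
      invFun := fun x => ![x.1, x.2.1, x.2.2]
      map_add' := by intro x y; rfl
      map_smul' := by intro m x; rfl
      left_inv := by intro v; ext i; fin_cases i <;> rfl
      right_inv := by intro x; rfl }
  have hdet : LinearMap.det L = 1 := by
    have hL : L = (e : (Fin 3 → ℝ) →ₗ[ℝ] (ℝ × ℝ × ℝ)) ∘ₗ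
        (Matrix.toLin' !![s, -c, 0; c, s, 0; 0, 0, 1]) ∘ₗ
        (e.symm : (ℝ × ℝ × ℝ) →ₗ[ℝ] (Fin 3 → ℝ)) := by
      apply LinearMap.ext
      intro x
      have he : e.symm x = ![x.1, x.2.1, x.2.2] := rfl
      have he' : ∀ v, e v = (v 0, v 1, v 2) := fun v => rfl
      simp only [LinearMap.comp_apply, LinearEquiv.coe_coe, he, he']
      simp [L, Matrix.mulVec, dotProduct, Fin.sum_univ_three, sub_eq_add_neg]
    rw [hL, LinearMap.det_conj, LinearMap.det_toLin', Matrix.det_fin_three]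
    simp
    linarith
  refine ⟨?_, ?_⟩
  · fun_prop
  · have i2 : (volume : Measure (ℝ × ℝ)).IsAddHaarMeasure :=
      inferInstanceAs ((volume : Measure ℝ).prod (volume : Measure ℝ)).IsAddHaarMeasure
    have i3 : (volume : Measure (ℝ × ℝ × ℝ)).IsAddHaarMeasure :=
      inferInstanceAs ((volume : Measure ℝ).prod (volume : Measure (ℝ × ℝ))).IsAddHaarMeasure
    have := Measure.map_linearMap_addHaar_eq_smul_addHaar (volume : Measure (ℝ × ℝ × ℝ)) (f := L)
      (by rw [hdet]; norm_num)
    rw [hdet] at this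
    simp only [inv_one, abs_one, ENNReal.ofReal_one, one_smul] at this
    exact this

end MagWedge

namespace MagWedge

lemma mem_wedge (α : ℝ) (hα : α ∈ Set.Ioo 0 π) (x : ℝ × ℝ × ℝ) :
    x ∈ wedge α ↔ 0 ≤ sin (α / 2) * x.1 - cos (α / 2) * x.2.1 ∧
      (sin (α / 2) * x.1 - cos (α / 2) * x.2.1) * cos α
        ≤ (cos (α / 2) * x.1 + sin (α / 2) * x.2.1) * sin α := by
  have hc : 0 < cos (α / 2) := cos_pos_of_mem_Ioo ⟨by linarith [hα.1, pi_pos], by linarith [hα.2]⟩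
  have hs := Real.sin_sq_add_cos_sq (α / 2)
  have e1 : sin α = 2 * sin (α / 2) * cos (α / 2) := by rw [← Real.sin_two_mul]; congr 1; ring
  have e2 : cos α = cos (α / 2) ^ 2 - sin (α / 2) ^ 2 := by
    rw [← Real.cos_two_mul']; congr 1; ring
  have e3 : (cos (α / 2) * x.1 + sin (α / 2) * x.2.1) * sin α -
      (sin (α / 2) * x.1 - cos (α / 2) * x.2.1) * cos α
      = (sin (α / 2) * x.1 + cos (α / 2) * x.2.1) := by
    rw [e1, e2]
    linear_combination (sin (α / 2) * x.1 + cos (α / 2) * x.2.1) * hs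
  simp only [wedge, Set.mem_setOf_eq, Real.tan_eq_sin_div_cos]
  rw [← mul_div_assoc, le_div_iff₀ hc, ← sub_nonneg (a := (cos (α / 2) * x.1 + _) * _), e3]
  have : |x.2.1| * cos (α / 2) = |cos (α / 2) * x.2.1| := by
    rw [abs_mul, abs_of_pos hc, mul_comm]
  rw [this, abs_le]
  constructor
  · rintro ⟨h1, h2⟩; constructor <;> linarith
  · rintro ⟨h1, h2⟩; constructor <;> linarith

lemma measurable_wedge (α : ℝ) : MeasurableSet (wedge α) := by
  apply IsClosed.measurableSet
  apply isClosed_le <;> fun_prop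

lemma int_wedge (α : ℝ) (hα : α ∈ Set.Ioo 0 π) (G H J : ℝ → ℝ) (T n : ℝ)
    (hn : 0 < n) (hT : T ≤ n * sin α) (hG : ∀ t, T < t → G t = 0) (hH : ∀ y, y < n → H y = 0) :
    ∫ x in wedge α, G (sin (α / 2) * x.1 - cos (α / 2) * x.2.1) *
      (H (cos (α / 2) * x.1 + sin (α / 2) * x.2.1) * J x.2.2)
    = (∫ t in Ioi (0 : ℝ), G t) * ((∫ y, H y) * (∫ z, J z)) := by
  have hmp := rot_mp (cos (α / 2)) (sin (α / 2)) (by rw [Real.cos_sq_add_sin_sq])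
  have hsα : 0 < sin α := sin_pos_of_mem_Ioo hα
  have hemb : MeasurableEmbedding (fun x : ℝ × ℝ × ℝ => (sin (α / 2) * x.1 - cos (α / 2) * x.2.1,
      (cos (α / 2) * x.1 + sin (α / 2) * x.2.1, x.2.2))) := by
    apply Continuous.measurableEmbedding (by fun_prop)
    have hs := Real.sin_sq_add_cos_sq (α / 2)
    rintro ⟨x1, x2, x3⟩ ⟨y1, y2, y3⟩ h
    simp only [Prod.mk.injEq] at h ⊢
    obtain ⟨h1, h2, h3⟩ := h
    refine ⟨?_, ?_, h3⟩
    · linear_combination (y1 - x1) * hs + sin (α / 2) * h1 + cos (α / 2) * h2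
    · linear_combination (y2 - x2) * hs - cos (α / 2) * h1 + sin (α / 2) * h2
  rw [← integral_indicator (measurable_wedge α)]
  have key : ∀ x : ℝ × ℝ × ℝ, (wedge α).indicator
      (fun x => G (sin (α / 2) * x.1 - cos (α / 2) * x.2.1) *
      (H (cos (α / 2) * x.1 + sin (α / 2) * x.2.1) * J x.2.2)) x
      = (fun y : ℝ × ℝ × ℝ => (Ici (0 : ℝ)).indicator G y.1 *
        ((fun p : ℝ × ℝ => H p.1 * J p.2) y.2))
        ((fun x : ℝ × ℝ × ℝ => (sin (α / 2) * x.1 - cos (α / 2) * x.2.1,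
      (cos (α / 2) * x.1 + sin (α / 2) * x.2.1, x.2.2))) x) := by
    intro x
    simp only
    by_cases hx : x ∈ wedge α
    · rw [indicator_of_mem hx, indicator_of_mem]
      exact ((mem_wedge α hα x).1 hx).1
    · rw [indicator_of_notMem hx]
      by_cases ht : 0 ≤ sin (α / 2) * x.1 - cos (α / 2) * x.2.1
      · rw [indicator_of_mem (by exact ht)]
        rw [mem_wedge α hα, not_and] at hx
        have h1 := hx ht
        by_cases h2 : T < sin (α / 2) * x.1 - cos (α / 2) * x.2.1
        · rw [hG _ h2, zero_mul]
        · by_cases h3 : cos (α / 2) * x.1 + sin (α / 2) * x.2.1 < n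
          · rw [hH _ h3]; ring
          · exfalso
            apply h1
            push Not at h2 h3
            have := mul_le_mul_of_nonneg_right h3 hsα.le
            have := mul_le_mul_of_nonneg_left (cos_le_one α) ht
            linarith
      · rw [indicator_of_notMem (by exact ht), zero_mul]
  simp_rw [key]
  rw [hmp.integral_comp hemb (fun y : ℝ × ℝ × ℝ => (Ici (0 : ℝ)).indicator G y.1 *
        ((fun p : ℝ × ℝ => H p.1 * J p.2) y.2))]
  rw [show (volume : Measure (ℝ × ℝ × ℝ)) = (volume : Measure ℝ).prod (volume : Measure (ℝ × ℝ))
    from rfl]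
  rw [integral_prod_mul ((Ici (0 : ℝ)).indicator G) (fun p : ℝ × ℝ => H p.1 * J p.2)]
  rw [integral_indicator measurableSet_Ici, integral_Ici_eq_integral_Ioi]
  rw [show (volume : Measure (ℝ × ℝ)) = (volume : Measure ℝ).prod (volume : Measure ℝ)
    from rfl, integral_prod_mul]

lemma integrable_wedge (α : ℝ) (G H J : ℝ → ℝ)
    (hG : Integrable G) (hH : Integrable H) (hJ : Integrable J) :
    IntegrableOn (fun x : ℝ × ℝ × ℝ => G (sin (α / 2) * x.1 - cos (α / 2) * x.2.1) *
      (H (cos (α / 2) * x.1 + sin (α / 2) * x.2.1) * J x.2.2)) (wedge α) := by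
  have hmp := rot_mp (cos (α / 2)) (sin (α / 2)) (by rw [Real.cos_sq_add_sin_sq])
  exact (hmp.integrable_comp_of_integrable (hG.mul_prod (hH.mul_prod hJ))).integrableOn

lemma trial_compact (c s C S ξ : ℝ) (h1 : c ^ 2 + s ^ 2 = 1) (f : ℝ → ℂ) (k w : ℝ → ℝ)
    (hf : HasCompactSupport f) (hk : HasCompactSupport k) (hw : HasCompactSupport w) :
    HasCompactSupport (trial c s C S ξ f k w) := by
  have hK : IsCompact (tsupport f ×ˢ (tsupport k ×ˢ tsupport w)) :=
    IsCompact.prod hf (IsCompact.prod hk hw)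
  have hK' := hK.image (f := fun y : ℝ × ℝ × ℝ => (c * y.2.1 + s * y.1, s * y.2.1 - c * y.1, y.2.2))
    (by fun_prop)
  apply HasCompactSupport.intro hK'
  intro x hx
  by_contra hne
  apply hx
  unfold trial at hne
  simp only [mul_ne_zero_iff, ne_eq, Complex.ofReal_eq_zero] at hne
  obtain ⟨-, h2, h3, h4⟩ := hne
  refine ⟨(s * x.1 - c * x.2.1, c * x.1 + s * x.2.1, x.2.2),
    ⟨subset_tsupport _ h2, subset_tsupport _ h3, subset_tsupport _ h4⟩, ?_⟩
  ext
  · simp only; linear_combination x.1 * h1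
  · simp only; linear_combination x.2.1 * h1
  · rfl

lemma exists_eta : ∃ η : ℝ → ℝ, ContDiff ℝ (⊤ : ℕ∞) η ∧ HasCompactSupport η ∧
    (∀ x, x ≤ 1 → η x = 0) ∧ (∀ x, x < 1 → deriv η x = 0) ∧ 0 < ∫ x, η x ^ 2 := by
  let b : ContDiffBump (2 : ℝ) := ⟨1/4, 1/2, by norm_num, by norm_num⟩
  have hz : ∀ x, x ≤ 1 → b x = 0 := by
    intro x hx
    apply b.zero_of_le_dist
    rw [Real.dist_eq]
    have : (b.rOut) = 1/2 := rfl
    rw [this, abs_sub_comm]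
    exact le_trans (by linarith) (le_abs_self _)
  refine ⟨b, b.contDiff, b.hasCompactSupport, hz, ?_, ?_⟩
  · intro x hx
    have : (b : ℝ → ℝ) =ᶠ[nhds x] fun _ => 0 := by
      filter_upwards [Iio_mem_nhds hx] with y hy using hz y (le_of_lt hy)
    rw [this.deriv_eq]; simp
  · apply Continuous.integral_pos_of_hasCompactSupport_nonneg_nonzero (x := 2)
    · exact b.continuous.pow 2
    · have := b.hasCompactSupport
      have h := this.comp_left (g := fun x : ℝ => x ^ 2) (by simp)
      exact h
    · intro x; positivity
    · have : b 2 = 1 := b.one_of_mem_closedBall (by simp [b])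
      simp [this]

lemma int_cs {g : ℝ → ℝ} (hg : Continuous g) (h : HasCompactSupport g) : Integrable g :=
  hg.integrable_of_hasCompactSupport h

lemma quotient_bound (α γ ξ : ℝ) (hα : α ∈ Set.Ioo 0 π) (f : ℝ → ℂ)
    (hf : ContDiff ℝ (⊤ : ℕ∞) f) (hfc : HasCompactSupport f)
    (hpos : 0 < ∫ t in Ioi (0 : ℝ), ‖f t‖ ^ 2) :
    lambdaWedge α (Real.sin γ * Real.cos (α / 2)) (Real.sin γ * Real.sin (α / 2)) (Real.cos γ)
    ≤ (∫ t in Ioi (0 : ℝ), ‖deriv f t‖ ^ 2 + (t - ξ) ^ 2 * ‖f t‖ ^ 2) /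
        (∫ t in Ioi (0 : ℝ), ‖f t‖ ^ 2) := by
  obtain ⟨η, hη, hηc, hη0, hη0', hηp⟩ := exists_eta
  have hsα : 0 < sin α := sin_pos_of_mem_Ioo hα
  obtain ⟨T, hTs⟩ := hfc.isCompact.isBounded.subset_closedBall (0 : ℝ)
  have hfT : ∀ t, T < t → f t = 0 := by
    intro t ht
    by_contra h
    have := hTs (subset_tsupport _ h)
    rw [Metric.mem_closedBall, Real.dist_eq, sub_zero] at this
    linarith [le_abs_self t]
  have hfT' : ∀ t, T < t → deriv f t = 0 := by
    intro t ht
    have : f =ᶠ[nhds t] fun _ => 0 := by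
      filter_upwards [Ioi_mem_nhds ht] with y hy using hfT y hy
    rw [this.deriv_eq]; simp
  set F := ∫ t in Ioi (0 : ℝ), ‖f t‖ ^ 2 with hF
  set E := ∫ t in Ioi (0 : ℝ), ‖deriv f t‖ ^ 2 + (t - ξ) ^ 2 * ‖f t‖ ^ 2 with hE
  set N := ∫ x, η x ^ 2 with hN
  set D := ∫ x, deriv η x ^ 2 with hD
  have hfcont : Continuous f := hf.continuous
  have hfcont' : Continuous (deriv f) := hf.continuous_deriv (by simp)
  have iF : Integrable (fun t => ‖f t‖ ^ 2) := int_cs (by fun_prop)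
    (hfc.comp_left (g := fun z : ℂ => ‖z‖ ^ 2) (by simp))
  have iE : Integrable (fun t => ‖deriv f t‖ ^ 2 + (t - ξ) ^ 2 * ‖f t‖ ^ 2) := by
    apply int_cs (by fun_prop)
    apply HasCompactSupport.add
    · exact (hfc.deriv).comp_left (g := fun z : ℂ => ‖z‖ ^ 2) (by simp)
    · exact (hfc.comp_left (g := fun z : ℂ => ‖z‖ ^ 2) (by simp)).mul_left
  have main : ∀ n : ℝ, 0 < n → T ≤ n * sin α →
      lambdaWedge α (Real.sin γ * Real.cos (α / 2)) (Real.sin γ * Real.sin (α / 2)) (Real.cos γ)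
      ≤ E / F + 2 * (D / N) * (n⁻¹) ^ 2 := by
    intro n hn hT
    let k : ℝ → ℝ := fun x => η (x / n)
    have hk : ContDiff ℝ (⊤ : ℕ∞) k := hη.comp (by fun_prop)
    have hkd : ∀ x, deriv k x = deriv η (x / n) / n := by
      intro x
      have h1 : HasDerivAt η (deriv η (x / n)) (x / n) :=
        (hη.differentiable (by simp) _).hasDerivAt
      have h2 : HasDerivAt (fun x : ℝ => x / n) (1 / n) x := (hasDerivAt_id x).div_const n
      have h3 := (h1.comp x h2).deriv
      have h4 : deriv k x = deriv η (x / n) * (1 / n) := h3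
      rw [h4]; ring
    have hkc : HasCompactSupport k := by
      have := hηc.comp_homeomorph (Homeomorph.mulRight₀ (n⁻¹) (by positivity))
      exact this
    have hkcont : Continuous k := hk.continuous
    have hkcont' : Continuous (deriv k) := hk.continuous_deriv (by simp)
    have hk0 : ∀ x, x < n → k x = 0 := fun x hx => hη0 _ ((div_lt_one hn).2 hx).le
    have hk0' : ∀ x, x < n → deriv k x = 0 := fun x hx => by
      rw [hkd, hη0' _ ((div_lt_one hn).2 hx), zero_div]
    have ik : Integrable (fun x => k x ^ 2) := int_cs (by fun_prop)
      (hkc.comp_left (g := fun z : ℝ => z ^ 2) (by simp))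
    have ik' : Integrable (fun x => deriv k x ^ 2) := int_cs (by fun_prop)
      (hkc.deriv.comp_left (g := fun z : ℝ => z ^ 2) (by simp))
    have vk : ∫ x, k x ^ 2 = n * N := by
      have := Measure.integral_comp_div (fun x => η x ^ 2) n
      rw [abs_of_pos hn, smul_eq_mul] at this
      exact this
    have vk' : ∫ x, deriv k x ^ 2 = n⁻¹ * D := by
      have := Measure.integral_comp_div (fun x => deriv η x ^ 2) n
      rw [abs_of_pos hn, smul_eq_mul] at this
      simp_rw [hkd, div_pow]
      rw [integral_div, this]
      field_simp
      rfl
    let u := trial (cos (α / 2)) (sin (α / 2)) (cos γ) (sin γ) ξ f k k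
    have hnorm : norm3D (wedge α) u = F * ((n * N) * (n * N)) := by
      unfold norm3D
      simp_rw [u, trial_norm]
      rw [int_wedge α hα (fun t => ‖f t‖ ^ 2) (fun y => k y ^ 2) (fun y => k y ^ 2) T n hn hT
        (fun t ht => by simp [hfT t ht]) (fun y hy => by simp [hk0 y hy]), vk]
    have hen : energy3D (wedge α) (Real.sin γ * Real.cos (α / 2)) (Real.sin γ * Real.sin (α / 2))
        (Real.cos γ) u = E * ((n * N) * (n * N)) + F * ((n⁻¹ * D) * (n * N))
          + F * ((n * N) * (n⁻¹ * D)) := by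
      unfold energy3D
      simp_rw [u, trial_density (cos (α / 2)) (sin (α / 2)) (cos γ) (sin γ) ξ
        (Real.cos_sq_add_sin_sq _) (Real.cos_sq_add_sin_sq _) f k k hf hk hk]
      have I1 := integrable_wedge α _ _ _ iE ik ik
      have I2 := integrable_wedge α _ _ _ iF ik' ik
      have I3 := integrable_wedge α _ _ _ iF ik ik'
      refine (integral_add (I1.add I2) I3).trans ?_
      refine (congrArg (· + _) (integral_add I1 I2)).trans ?_
      beta_reduce
      rw [int_wedge α hα (fun t => ‖deriv f t‖ ^ 2 + (t - ξ) ^ 2 * ‖f t‖ ^ 2)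
        (fun y => k y ^ 2) (fun y => k y ^ 2) T n hn hT
        (fun t ht => by simp [hfT t ht, hfT' t ht]) (fun y hy => by simp [hk0 y hy]),
        int_wedge α hα (fun t => ‖f t‖ ^ 2)
        (fun y => deriv k y ^ 2) (fun y => k y ^ 2) T n hn hT
        (fun t ht => by simp [hfT t ht]) (fun y hy => by simp [hk0' y hy]),
        int_wedge α hα (fun t => ‖f t‖ ^ 2)
        (fun y => k y ^ 2) (fun y => deriv k y ^ 2) T n hn hT
        (fun t ht => by simp [hfT t ht]) (fun y hy => by simp [hk0 y hy]), vk, vk']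
    have hle : lambdaWedge α (Real.sin γ * Real.cos (α / 2)) (Real.sin γ * Real.sin (α / 2))
        (Real.cos γ) ≤ energy3D (wedge α) (Real.sin γ * Real.cos (α / 2))
          (Real.sin γ * Real.sin (α / 2)) (Real.cos γ) u / norm3D (wedge α) u := by
      unfold lambdaWedge
      apply csInf_le
      · refine ⟨0, ?_⟩
        rintro r ⟨v, -, -, hv, rfl⟩
        apply div_nonneg _ hv.le
        unfold energy3D
        apply integral_nonneg
        intro x
        positivity
      · exact ⟨u, trial_contDiff _ _ _ _ _ _ _ _ hf hk hk,
          trial_compact _ _ _ _ _ (Real.cos_sq_add_sin_sq _) _ _ _ hfc hkc hkc,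
          by rw [hnorm]; positivity, rfl⟩
    refine hle.trans (le_of_eq ?_)
    rw [hnorm, hen]
    field_simp
    ring
  have lim : Tendsto (fun n : ℝ => E / F + 2 * (D / N) * (n⁻¹) ^ 2) atTop (nhds (E / F)) := by
    have := ((tendsto_inv_atTop_zero (𝕜 := ℝ)).pow 2).const_mul (2 * (D / N))
    simpa using this.const_add (E / F)
  refine ge_of_tendsto lim ?_
  filter_upwards [eventually_gt_atTop 0, eventually_ge_atTop (T / sin α)] with n h1 h2
  exact main n h1 ((div_le_iff₀ hsα).1 h2)

end MagWedge

open MagWedge in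
/-- for a field tangent to a face, `λ(B;W_α) ≤ Θ₀`. -/
theorem lambdaWedge_le_Theta0 (α γ : ℝ) (hα : α ∈ Set.Ioo 0 π) (hγ : γ ∈ Set.Icc 0 (π / 2)) :
    lambdaWedge α (Real.sin γ * Real.cos (α / 2)) (Real.sin γ * Real.sin (α / 2)) (Real.cos γ)
      ≤ Theta0 := by
  unfold Theta0
  apply le_ciInf
  intro ξ
  unfold deGennes
  apply le_csInf
  · obtain ⟨η, hη, hηc, hη0, -, hηp⟩ := exists_eta
    refine ⟨_, fun x => (η x : ℂ), Complex.ofRealCLM.contDiff.comp hη,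
      hηc.comp_left (g := fun x : ℝ => (x : ℂ)) (by simp), ?_, rfl⟩
    have : ∫ t in Ioi (0 : ℝ), ‖(η t : ℂ)‖ ^ 2 = ∫ x, η x ^ 2 := by
      rw [setIntegral_eq_integral_of_forall_compl_eq_zero]
      · simp
      · intro x hx
        have : x ≤ 0 := by simpa using hx
        rw [hη0 x (by linarith)]; simp
    rw [this]; exact hηp
  · rintro r ⟨f, hf, hfc, hpos, rfl⟩
    exact quotient_bound α γ ξ hα f hf hfc hpos
end
end
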